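/- arXiv:2105.02355 — 5 statements merged into one kernel-verified Lean document; each statement's English description precedes it below -/
import Mathlib

section
/- Let (Δ; Ω, ≤) be a homological system over an Artin algebra Λ, with height function h, let M be a nonzero module in F(Δ), and let F = {0 = M_0 ⊊ M_1 ⊊ ⋯ ⊊ M_t = M} be a Δ-filtration of M. Then there exists a Δ-filtration F' = {0 = M'_0 ⊊ M'_1 ⊊ ⋯ ⊊ M'_t = M} of M with ℓ_ω(F) = ℓ_ω(F') for every ω ∈ Ω, and such that whenever 1 ≤ i ≤ j ≤ t, M'_i/M'_{i-1} ≅ Δ_ω and M'_j/M'_{j-1} ≅ Δ_{ω'}, one has h(ω) ≥ h(ω'); that is, the heights of the filtration factors are weakly decreasing along the filtration. -/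
universe u v

open DirectSum

/-- The height function of a finite preordered set `Ω`: `h ω` is `1` plus the length of the
longest strict chain `ω₀ < ω₁ < ⋯ < ωₙ = ω` ending at `ω` (so minimal elements have height 1). -/
noncomputable def heightFun {Ω : Type v} [Preorder Ω] [Fintype Ω] (ω : Ω) : ℕ :=
  1 + (⨆ (p : LTSeries Ω) (_ : p.last = ω), (p.length : ℕ∞)).toNat

/-- `EverySESSplits Λ A B` says that every short exact sequence of `Λ`-modules
`0 → A → E → B → 0` splits; this is the statement `Ext¹_Λ(B, A) = 0`. -/
def EverySESSplits (Λ : Type u) [Ring Λ] (A B : Type u)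
    [AddCommGroup A] [Module Λ A] [AddCommGroup B] [Module Λ B] : Prop :=
  ∀ (E : Type u) [AddCommGroup E] [Module Λ E] (f : A →ₗ[Λ] E) (g : E →ₗ[Λ] B),
    Function.Injective f → Function.Surjective g → LinearMap.range f = LinearMap.ker g →
      ∃ s : B →ₗ[Λ] E, g.comp s = LinearMap.id

/-- A homological system `(Δ; Ω, ≤)` over the ring `Λ`:
`Ω` is a finite (pre)ordered index set; the `Δ ω` are pairwise nonisomorphic indecomposable
finitely generated `Λ`-modules satisfying (HS3) `Hom (Δ ω, Δ ω') ≠ 0 → ω ≤ ω'` and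
(HS4) `Ext¹ (Δ ω, Δ ω') ≠ 0 → ω ≤ ω' ∧ ¬ ω' ≤ ω` (the latter expressed contrapositively via
splitting of all short exact sequences `0 → Δ ω' → E → Δ ω → 0`). -/
structure IsHomologicalSystem (Λ : Type u) [Ring Λ] {Ω : Type v} [Preorder Ω] [Fintype Ω]
    (Δ : Ω → Type u) [∀ ω, AddCommGroup (Δ ω)] [∀ ω, Module Λ (Δ ω)] : Prop where
  fg : ∀ ω, Module.Finite Λ (Δ ω)
  nontrivial : ∀ ω, Nontrivial (Δ ω)
  indecomposable : ∀ ω (A B : Submodule Λ (Δ ω)), IsCompl A B → A = ⊥ ∨ B = ⊥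
  pairwise_nonIso : ∀ ω ω', ω ≠ ω' → IsEmpty (Δ ω ≃ₗ[Λ] Δ ω')
  hs3 : ∀ ω ω' (f : Δ ω →ₗ[Λ] Δ ω'), f ≠ 0 → ω ≤ ω'
  hs4 : ∀ ω ω', ¬(ω ≤ ω' ∧ ¬ ω' ≤ ω) → EverySESSplits Λ (Δ ω') (Δ ω)

/-- `IsDeltaFiltration Λ Δ t F` says that `⊥ = F 0 ⊊ F 1 ⊊ ⋯ ⊊ F t = ⊤` is a `Δ`-filtration
of `M`, i.e. each factor `F (i+1) / F i` is isomorphic to some `Δ ω`. -/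
def IsDeltaFiltration (Λ : Type u) [Ring Λ] {Ω : Type v} [Preorder Ω] [Fintype Ω]
    (Δ : Ω → Type u) [∀ ω, AddCommGroup (Δ ω)] [∀ ω, Module Λ (Δ ω)]
    {M : Type u} [AddCommGroup M] [Module Λ M]
    (t : ℕ) (F : Fin (t + 1) → Submodule Λ M) : Prop :=
  F 0 = ⊥ ∧ F (Fin.last t) = ⊤ ∧ StrictMono F ∧
    ∀ i : Fin t, ∃ ω : Ω,
      Nonempty ((F i.succ ⧸ (F i.castSucc).comap (F i.succ).subtype) ≃ₗ[Λ] Δ ω)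

/-- `M ∈ 𝔉(Δ)`: the `Λ`-module `M` admits a `Δ`-filtration. -/
def MemFiltCat (Λ : Type u) [Ring Λ] {Ω : Type v} [Preorder Ω] [Fintype Ω]
    (Δ : Ω → Type u) [∀ ω, AddCommGroup (Δ ω)] [∀ ω, Module Λ (Δ ω)]
    (M : Type u) [AddCommGroup M] [Module Λ M] : Prop :=
  ∃ (t : ℕ) (F : Fin (t + 1) → Submodule Λ M), IsDeltaFiltration Λ Δ t F

/-- `ℓ_ω(F)`: the number of factors of the filtration `F` isomorphic to `Δ ω`. -/
noncomputable def ellOmega (Λ : Type u) [Ring Λ] {Ω : Type v} [Preorder Ω] [Fintype Ω]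
    (Δ : Ω → Type u) [∀ ω, AddCommGroup (Δ ω)] [∀ ω, Module Λ (Δ ω)]
    {M : Type u} [AddCommGroup M] [Module Λ M]
    (t : ℕ) (F : Fin (t + 1) → Submodule Λ M) (ω : Ω) : ℕ :=
  Nat.card {i : Fin t //
    Nonempty ((F i.succ ⧸ (F i.castSucc).comap (F i.succ).subtype) ≃ₗ[Λ] Δ ω)}

/-- An `h`-filtration `0 = W (a+1) ⊆ W a ⊆ ⋯ ⊆ W 1 = M` of `M`: the `i`-th layer
`W i / W (i+1)` is a finite direct sum `⨁_{ω : h ω = i} (n ω) • Δ ω` of copies of the `Δ ω`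
with `heightFun ω = i`. -/
def IsHFiltration (Λ : Type u) [Ring Λ] {Ω : Type v} [Preorder Ω] [Fintype Ω]
    (Δ : Ω → Type u) [∀ ω, AddCommGroup (Δ ω)] [∀ ω, Module Λ (Δ ω)]
    {M : Type u} [AddCommGroup M] [Module Λ M]
    (a : ℕ) (W : ℕ → Submodule Λ M) (n : Ω → ℕ) : Prop :=
  W (a + 1) = ⊥ ∧ W 1 = ⊤ ∧ (∀ i, 1 ≤ i → i ≤ a → W (i + 1) ≤ W i) ∧
    ∀ i, 1 ≤ i → i ≤ a →
      Nonempty ((W i ⧸ (W (i + 1)).comap (W i).subtype) ≃ₗ[Λ]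
        ⨁ ω : {ω : Ω // heightFun ω = i}, (Fin (n ω.1) → Δ ω.1))

/-- The trace `tr_L(N)` of `L` in `N`: the sum of the images of all `Λ`-homomorphisms `L → N`. -/
def traceSubmodule (Λ : Type u) [Ring Λ] (L N : Type u)
    [AddCommGroup L] [Module Λ L] [AddCommGroup N] [Module Λ N] : Submodule Λ N :=
  ⨆ f : L →ₗ[Λ] N, LinearMap.range f

/-- The factor `B / A` is isomorphic to `D`. -/
def QIso (Λ : Type u) [Ring Λ] {M : Type u} [AddCommGroup M] [Module Λ M]
    (A B : Submodule Λ M) (D : Type u) [AddCommGroup D] [Module Λ D] : Prop :=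
  Nonempty ((B ⧸ A.comap B.subtype) ≃ₗ[Λ] D)

theorem qiso_transfer {Λ : Type u} [Ring Λ] {M : Type u} [AddCommGroup M] [Module Λ M]
    (P Q : Submodule Λ M) (D : Type u) [AddCommGroup D] [Module Λ D] :
    QIso Λ (P ⊓ Q) P D ↔ QIso Λ Q (P ⊔ Q) D := by
  have e := LinearMap.quotientInfEquivSupQuotient P Q
  rw [← Submodule.comap_inf] at e
  exact ⟨fun ⟨f⟩ => ⟨e.symm.trans f⟩, fun ⟨f⟩ => ⟨e.trans f⟩⟩

theorem exists_compl {Λ : Type u} [Ring Λ] {M : Type u} [AddCommGroup M] [Module Λ M]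
    {A B C : Submodule Λ M} (hAB : A ≤ B) (hBC : B ≤ C)
    {D D' : Type u} [AddCommGroup D] [Module Λ D] [AddCommGroup D'] [Module Λ D']
    (h1 : QIso Λ A B D) (h2 : QIso Λ B C D') (hs : EverySESSplits Λ D D') :
    ∃ N : Submodule Λ M, N ⊓ B = A ∧ N ⊔ B = C := by
  obtain ⟨e1⟩ := h1
  obtain ⟨e2⟩ := h2
  let f0 : (B ⧸ A.comap B.subtype) →ₗ[Λ] (C ⧸ A.comap C.subtype) :=
    Submodule.mapQ _ _ (Submodule.inclusion hBC) (fun x hx => hx)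
  let g0 : (C ⧸ A.comap C.subtype) →ₗ[Λ] (C ⧸ B.comap C.subtype) :=
    Submodule.mapQ _ _ LinearMap.id (fun x hx => hAB hx)
  have hg0 : ∀ x : C, g0 (Submodule.Quotient.mk x) = 0 ↔ (x : M) ∈ B := by
    intro x
    simp only [g0, Submodule.mapQ_apply, LinearMap.id_apply, Submodule.Quotient.mk_eq_zero]
    rfl
  have hf0 : ∀ x : B, f0 (Submodule.Quotient.mk x) =
      Submodule.Quotient.mk (Submodule.inclusion hBC x) := fun x => rfl
  have hf : Function.Injective f0 := by
    rw [injective_iff_map_eq_zero]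
    intro x hx
    obtain ⟨x, rfl⟩ := Submodule.Quotient.mk_surjective _ x
    rw [hf0, Submodule.Quotient.mk_eq_zero] at hx
    rw [Submodule.Quotient.mk_eq_zero]
    exact hx
  have hg : Function.Surjective g0 := by
    intro x
    obtain ⟨x, rfl⟩ := Submodule.Quotient.mk_surjective _ x
    exact ⟨Submodule.Quotient.mk x, rfl⟩
  have hfg : LinearMap.range f0 = LinearMap.ker g0 := by
    ext x
    obtain ⟨x, rfl⟩ := Submodule.Quotient.mk_surjective _ x
    rw [LinearMap.mem_ker, hg0]
    constructor
    · rintro ⟨y, hy⟩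
      obtain ⟨y, rfl⟩ := Submodule.Quotient.mk_surjective _ y
      rw [← hg0, ← hy]
      rw [hf0, hg0]
      exact y.2
    · intro hx
      exact ⟨Submodule.Quotient.mk ⟨x, hx⟩, rfl⟩
  obtain ⟨s, hs⟩ := hs _ (f0 ∘ₗ (e1.symm : D →ₗ[Λ] _)) ((e2 : _ →ₗ[Λ] D') ∘ₗ g0)
    (hf.comp e1.symm.injective) (e2.surjective.comp hg) (by
      rw [LinearMap.range_comp_of_range_eq_top _ (LinearEquiv.range _),
        LinearMap.ker_comp_of_ker_eq_bot _ (LinearEquiv.ker _), hfg])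
  have hs' : ∀ y, e2 (g0 (s y)) = y := fun y => LinearMap.congr_fun hs y
  refine ⟨((LinearMap.range s).comap (Submodule.mkQ _)).map C.subtype, ?_, ?_⟩
  · apply le_antisymm
    · rintro _ ⟨⟨x, ⟨y, hy⟩, rfl⟩, hxB⟩
      have h0 := (hg0 x).2 hxB
      rw [Submodule.mkQ_apply] at hy
      have hy0 : y = 0 := by
        rw [← hs' y, hy, h0, map_zero]
      rw [hy0, map_zero, eq_comm, Submodule.Quotient.mk_eq_zero] at hy
      exact hy
    · intro x hx
      refine ⟨⟨⟨x, hBC (hAB hx)⟩, ⟨0, ?_⟩, rfl⟩, hAB hx⟩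
      rw [map_zero, Submodule.mkQ_apply, eq_comm, Submodule.Quotient.mk_eq_zero]
      exact hx
  · apply le_antisymm
    · exact sup_le (Submodule.map_subtype_le _ _) hBC
    · intro c hc
      obtain ⟨n, hn⟩ := Submodule.Quotient.mk_surjective _
        (s (e2 (g0 (Submodule.Quotient.mk ⟨c, hc⟩))))
      have hd : ((⟨c, hc⟩ - n : C) : M) ∈ B := by
        rw [← hg0]
        apply e2.injective
        rw [Submodule.Quotient.mk_sub, map_sub, map_sub, hn, hs', sub_self, map_zero]
      rw [Submodule.mem_sup]
      refine ⟨n, ⟨n, ⟨_, hn.symm⟩, rfl⟩, _, hd, ?_⟩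
      simp

theorem heightFun_mono {Ω : Type v} [Preorder Ω] [Fintype Ω] {a b : Ω} (h : a ≤ b) :
    heightFun a ≤ heightFun b := by
  unfold heightFun
  rw [← Order.height_eq_iSup_last_eq, ← Order.height_eq_iSup_last_eq]
  refine Nat.add_le_add_left (ENat.toNat_le_toNat (Order.height_mono h) ?_) 1
  intro htop
  rw [Order.height_eq_top_iff] at htop
  obtain ⟨p, -, hp⟩ := htop (Fintype.card Ω)
  have := p.length_lt_card
  omega

/-- Filtration with labels. -/
def LFilt (Λ : Type u) [Ring Λ] {Ω : Type v}
    (Δ : Ω → Type u) [∀ ω, AddCommGroup (Δ ω)] [∀ ω, Module Λ (Δ ω)]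
    {M : Type u} [AddCommGroup M] [Module Λ M]
    (t : ℕ) (F : Fin (t + 1) → Submodule Λ M) (w : Fin t → Ω) : Prop :=
  F 0 = ⊥ ∧ F (Fin.last t) = ⊤ ∧ StrictMono F ∧
    ∀ i : Fin t, QIso Λ (F i.castSucc) (F i.succ) (Δ (w i))

theorem lfilt_swap {Λ : Type u} [Ring Λ] {Ω : Type v} [Preorder Ω] [Fintype Ω]
    (Δ : Ω → Type u) [∀ ω, AddCommGroup (Δ ω)] [∀ ω, Module Λ (Δ ω)]
    (hs : IsHomologicalSystem Λ Δ)
    {M : Type u} [AddCommGroup M] [Module Λ M]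
    {t : ℕ} {F : Fin (t + 1) → Submodule Λ M} {w : Fin t → Ω} (hF : LFilt Λ Δ t F w)
    (i j : Fin t) (hij : i.succ = j.castSucc) (hh : heightFun (w i) < heightFun (w j)) :
    ∃ F' : Fin (t + 1) → Submodule Λ M, LFilt Λ Δ t F' (w ∘ Equiv.swap i j) := by
  obtain ⟨h0, h1, hm, hq⟩ := hF
  have hvij : i.val + 1 = j.val := congrArg Fin.val hij
  have hlt1 : F i.castSucc < F i.succ := hm i.castSucc_lt_succ
  have hlt2 : F i.succ < F j.succ := by rw [hij]; exact hm j.castSucc_lt_succ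
  have q1 := hq i
  have q2 := hq j
  rw [← hij] at q2
  have hsp : EverySESSplits Λ (Δ (w i)) (Δ (w j)) :=
    hs.hs4 _ _ (fun h => absurd (heightFun_mono h.1) (not_le.2 hh))
  obtain ⟨N, hN1, hN2⟩ := exists_compl hlt1.le hlt2.le q1 q2 hsp
  have n1 : QIso Λ (F i.castSucc) N (Δ (w j)) := by
    rw [← hN1, qiso_transfer, hN2]; exact q2
  have n2 : QIso Λ N (F j.succ) (Δ (w i)) := by
    rw [← hN2, sup_comm, ← qiso_transfer, inf_comm, hN1]; exact q1
  have l1 : F i.castSucc < N := by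
    refine lt_of_le_of_ne (hN1 ▸ inf_le_left) ?_
    intro h
    rw [← h, sup_eq_right.2 hlt1.le] at hN2
    exact hlt2.ne hN2
  have l2 : N < F j.succ := by
    refine lt_of_le_of_ne (hN2 ▸ le_sup_left) ?_
    intro h
    rw [h, inf_eq_right.2 hlt2.le] at hN1
    exact hlt1.ne hN1.symm
  have eval : ∀ k : Fin (t + 1), k.val ≠ i.val + 1 → Function.update F i.succ N k = F k := by
    intro k hk
    apply Function.update_of_ne
    rintro rfl
    exact hk rfl
  have key : ∀ k : Fin t,
      Function.update F i.succ N k.castSucc < Function.update F i.succ N k.succ ∧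
      QIso Λ (Function.update F i.succ N k.castSucc) (Function.update F i.succ N k.succ)
        (Δ ((w ∘ Equiv.swap i j) k)) := by
    intro k
    by_cases hki : k = i
    · subst hki
      rw [eval k.castSucc (by simp), Function.update_self, Function.comp, Equiv.swap_apply_left]
      exact ⟨l1, n1⟩
    by_cases hkj : k = j
    · subst hkj
      rw [eval k.succ (by simp; omega), ← hij, Function.update_self, Function.comp,
        Equiv.swap_apply_right]
      exact ⟨l2, n2⟩
    · have a1 : k.val ≠ i.val := fun h => hki (Fin.ext h)
      have a2 : k.val ≠ j.val := fun h => hkj (Fin.ext h)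
      rw [eval k.succ (by simp; omega), eval k.castSucc (by simp; omega), Function.comp,
        Equiv.swap_apply_of_ne_of_ne hki hkj]
      exact ⟨hm k.castSucc_lt_succ, hq k⟩
  refine ⟨Function.update F i.succ N, ?_, ?_, ?_, fun k => (key k).2⟩
  · rw [eval 0 (by simp), h0]
  · rw [eval _ (by simp; omega), h1]
  · exact Fin.strictMono_iff_lt_succ.2 fun k => (key k).1

theorem weight_swap {t : ℕ} (g : Fin t → ℕ) (i j : Fin t) (hij : i.val + 1 = j.val)
    (hg : g i < g j) :
    ∑ k : Fin t, k.val * g (Equiv.swap i j k) < ∑ k : Fin t, k.val * g k := by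
  have hne : j ≠ i := fun h => by rw [h] at hij; omega
  have hj : j ∈ Finset.univ.erase i := Finset.mem_erase.2 ⟨hne, Finset.mem_univ _⟩
  rw [← Finset.add_sum_erase _ _ (Finset.mem_univ i), ← Finset.add_sum_erase _ _ hj,
    ← Finset.add_sum_erase _ _ (Finset.mem_univ i), ← Finset.add_sum_erase _ _ hj,
    Equiv.swap_apply_left, Equiv.swap_apply_right]
  have : ∑ k ∈ (Finset.univ.erase i).erase j, k.val * g (Equiv.swap i j k) =
      ∑ k ∈ (Finset.univ.erase i).erase j, k.val * g k := by
    refine Finset.sum_congr rfl fun k hk => ?_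
    simp only [Finset.mem_erase] at hk
    rw [Equiv.swap_apply_of_ne_of_ne hk.2.1 hk.1]
  rw [this, ← hij]
  nlinarith

theorem lfilt_sort {Λ : Type u} [Ring Λ] {Ω : Type v} [Preorder Ω] [Fintype Ω]
    (Δ : Ω → Type u) [∀ ω, AddCommGroup (Δ ω)] [∀ ω, Module Λ (Δ ω)]
    (hs : IsHomologicalSystem Λ Δ)
    {M : Type u} [AddCommGroup M] [Module Λ M] {t : ℕ} :
    ∀ (n : ℕ) (F : Fin (t + 1) → Submodule Λ M) (w : Fin t → Ω), LFilt Λ Δ t F w →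
      ∑ k : Fin t, k.val * heightFun (w k) = n →
      ∃ (F' : Fin (t + 1) → Submodule Λ M) (σ : Equiv.Perm (Fin t)),
        LFilt Λ Δ t F' (w ∘ σ) ∧ Antitone (fun k => heightFun (w (σ k))) := by
  intro n
  induction n using Nat.strong_induction_on with
  | _ n ih =>
    intro F w hF hn
    by_cases hex : ∃ i j : Fin t, i.succ = j.castSucc ∧ heightFun (w i) < heightFun (w j)
    · obtain ⟨i, j, hij, hh⟩ := hex
      obtain ⟨F1, hF1⟩ := lfilt_swap Δ hs hF i j hij hh
      have := weight_swap (fun k => heightFun (w k)) i j (congrArg Fin.val hij) hh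
      obtain ⟨F2, σ, h2, h3⟩ := ih _ (hn ▸ this) F1 _ hF1 rfl
      exact ⟨F2, σ.trans (Equiv.swap i j), h2, h3⟩
    · refine ⟨F, Equiv.refl _, hF, ?_⟩
      cases t with
      | zero => exact fun a => a.elim0
      | succ m =>
        refine Fin.antitone_iff_succ_le.2 fun k => ?_
        by_contra hlt
        exact hex ⟨k.castSucc, k.succ, rfl, not_le.1 hlt⟩

theorem lfilt_iso_iff {Λ : Type u} [Ring Λ] {Ω : Type v} [Preorder Ω] [Fintype Ω]
    (Δ : Ω → Type u) [∀ ω, AddCommGroup (Δ ω)] [∀ ω, Module Λ (Δ ω)]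
    (hs : IsHomologicalSystem Λ Δ)
    {M : Type u} [AddCommGroup M] [Module Λ M]
    {t : ℕ} {F : Fin (t + 1) → Submodule Λ M} {w : Fin t → Ω} (hF : LFilt Λ Δ t F w)
    (i : Fin t) (ω : Ω) :
    Nonempty ((F i.succ ⧸ (F i.castSucc).comap (F i.succ).subtype) ≃ₗ[Λ] Δ ω) ↔ w i = ω := by
  obtain ⟨e⟩ := hF.2.2.2 i
  constructor
  · rintro ⟨f⟩
    by_contra hne
    exact (hs.pairwise_nonIso _ _ hne).false (e.symm.trans f)
  · rintro rfl
    exact ⟨e⟩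

/-- Proposition 6 (arrangement): any `Δ`-filtration of a nonzero `M ∈ 𝔉(Δ)` can be rearranged
into a `Δ`-filtration with the same multiplicities `ℓ_ω` whose factors have weakly decreasing
heights along the filtration. -/
theorem exists_deltaFiltration_height_decreasing
    {R : Type u} [CommRing R] [IsArtinianRing R]
    {Λ : Type u} [Ring Λ] [Algebra R Λ] [Module.Finite R Λ]
    {Ω : Type v} [Preorder Ω] [Fintype Ω] [Nonempty Ω]
    (Δ : Ω → Type u) [∀ ω, AddCommGroup (Δ ω)] [∀ ω, Module Λ (Δ ω)]
    (hs : IsHomologicalSystem Λ Δ)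
    (M : Type u) [AddCommGroup M] [Module Λ M] [Module.Finite Λ M] (hM : Nontrivial M)
    (t : ℕ) (F : Fin (t + 1) → Submodule Λ M) (hF : IsDeltaFiltration Λ Δ t F) :
    ∃ F' : Fin (t + 1) → Submodule Λ M, IsDeltaFiltration Λ Δ t F' ∧
      (∀ ω : Ω, ellOmega Λ Δ t F ω = ellOmega Λ Δ t F' ω) ∧
      ∀ i j : Fin t, i ≤ j → ∀ ω ω' : Ω,
        Nonempty ((F' i.succ ⧸ (F' i.castSucc).comap (F' i.succ).subtype) ≃ₗ[Λ] Δ ω) →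
        Nonempty ((F' j.succ ⧸ (F' j.castSucc).comap (F' j.succ).subtype) ≃ₗ[Λ] Δ ω') →
        heightFun ω' ≤ heightFun ω := by
  classical
  obtain ⟨h0, h1, hm, hq⟩ := hF
  choose w hw using hq
  have hL : LFilt Λ Δ t F w := ⟨h0, h1, hm, hw⟩
  obtain ⟨F', σ, hL', hanti⟩ := lfilt_sort Δ hs _ F w hL rfl
  refine ⟨F', ⟨hL'.1, hL'.2.1, hL'.2.2.1, fun i => ⟨_, hL'.2.2.2 i⟩⟩, ?_, ?_⟩
  · intro ω
    unfold ellOmega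
    simp only [lfilt_iso_iff Δ hs hL, lfilt_iso_iff Δ hs hL']
    exact (Nat.card_congr (σ.subtypeEquiv (fun _ => Iff.rfl))).symm
  · intro i j hij ω ω' h h'
    rw [lfilt_iso_iff Δ hs hL'] at h h'
    subst h h'
    exact hanti hij
end

section
/- Let (Δ; Ω, ≤) be a homological system over an Artin algebra Λ with height function h, and let {1, 2, …, a} be the image of h. If M ∈ F(Δ), then there exists a filtration {0} = W_{a+1} ⊆ W_a ⊆ ⋯ ⊆ W_1 = M of submodules such that for each i ∈ {1,…,a}, the quotient W_i/W_{i+1} is isomorphic to a finite direct sum ⨁_{ω: h(ω)=i} n_ω Δ_ω of copies of the modules Δ_ω with h(ω) = i, where n_ω are nonnegative integers (such a filtration is called an h-filtration). -/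
universe u v

open DirectSum

lemma heightFun_lt {Ω : Type v} [Preorder Ω] [Fintype Ω] {x y : Ω} (h : x < y) :
    heightFun x < heightFun y := by
  have hfin : ∀ z : Ω, Order.height z < ⊤ := by
    intro z
    refine lt_of_le_of_lt (b := ((Fintype.card Ω : ℕ) : ℕ∞)) ?_ (ENat.natCast_lt_top _)
    refine Order.height_le fun p _ => ?_
    have := Fintype.card_le_of_injective _ p.strictMono.injective
    simp at this
    exact_mod_cast by omega
  have heq : ∀ z : Ω, heightFun z = 1 + (Order.height z).toNat := by
    intro z
    rw [heightFun, Order.height_eq_iSup_last_eq]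
  rw [heq, heq]
  have h1 := Order.height_strictMono h (hfin x)
  obtain ⟨p, hp⟩ := ENat.ne_top_iff_exists.1 (hfin x).ne
  obtain ⟨q, hq⟩ := ENat.ne_top_iff_exists.1 (hfin y).ne
  rw [← hp, ← hq] at h1 ⊢
  have h2 : p < q := by exact_mod_cast h1
  simp only [ENat.toNat_coe]
  omega

lemma extend_hom {Λ : Type u} [Ring Λ] {A E B C : Type u}
    [AddCommGroup A] [Module Λ A] [AddCommGroup B] [Module Λ B]
    [AddCommGroup E] [Module Λ E] [AddCommGroup C] [Module Λ C]
    (hC : EverySESSplits Λ C B) (f : A →ₗ[Λ] E) (g : E →ₗ[Λ] B)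
    (hf : Function.Injective f) (hg : Function.Surjective g)
    (hfg : ∀ x, g x = 0 ↔ ∃ a, f a = x) (φ : A →ₗ[Λ] C) :
    ∃ ψ : E →ₗ[Λ] C, ∀ a, ψ (f a) = φ a := by
  let S : Submodule Λ (C × E) := LinearMap.range (φ.prod (-f))
  have hS : ∀ c e, (c, e) ∈ S ↔ ∃ a, φ a = c ∧ - f a = e := by
    intro c e
    simp [S, LinearMap.mem_range]
  let F : C →ₗ[Λ] (C × E) ⧸ S := S.mkQ ∘ₗ LinearMap.inl Λ C E
  let G : ((C × E) ⧸ S) →ₗ[Λ] B := S.liftQ (g ∘ₗ LinearMap.snd Λ C E) (by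
    rintro ⟨c, e⟩ h
    obtain ⟨a, rfl, rfl⟩ := (hS _ _).1 h
    simp [(hfg (f a)).2 ⟨a, rfl⟩])
  have hF : Function.Injective F := by
    rw [injective_iff_map_eq_zero]
    intro c hc
    have : ((c, 0) : C × E) ∈ S := by simpa [F] using hc
    obtain ⟨a, rfl, h2⟩ := (hS _ _).1 this
    have : a = 0 := hf (by simpa using h2)
    simp [this]
  have hG : Function.Surjective G := by
    intro b
    obtain ⟨e, rfl⟩ := hg b
    exact ⟨S.mkQ (0, e), by simp [G]⟩
  have hFG : LinearMap.range F = LinearMap.ker G := by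
    apply le_antisymm
    · rintro _ ⟨c, rfl⟩
      simp [F, G]
    · intro x hx
      obtain ⟨⟨c, e⟩, rfl⟩ := S.mkQ_surjective x
      have hge : g e = 0 := by simpa [G] using hx
      obtain ⟨a, rfl⟩ := (hfg e).1 hge
      refine ⟨c + φ a, ?_⟩
      simp only [F, LinearMap.comp_apply, Submodule.mkQ_apply, LinearMap.inl_apply]
      rw [Submodule.Quotient.eq]
      exact (hS _ _).2 ⟨a, by simp, by simp⟩
  have hs := hC _ F G hF hG hFG
  have hex : Function.Exact F G := LinearMap.exact_iff.2 hFG.symm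
  obtain ⟨r, hr⟩ := ((hex.split_tfae hF hG).out 0 1 rfl rfl).1 hs
  refine ⟨r ∘ₗ S.mkQ ∘ₗ LinearMap.inr Λ C E, fun a => ?_⟩
  have h1 : S.mkQ (0, f a) = F (φ a) := by
    simp only [F, LinearMap.comp_apply, Submodule.mkQ_apply, LinearMap.inl_apply]
    rw [Submodule.Quotient.eq]
    exact (hS _ _).2 ⟨-a, by simp, by simp⟩
  have h2 : r (F (φ a)) = φ a := LinearMap.congr_fun hr (φ a)
  simp only [LinearMap.comp_apply, LinearMap.inr_apply]
  rw [h1, h2]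

section HF

variable {Λ : Type u} [Ring Λ] {Ω : Type v} [Preorder Ω] [Fintype Ω]
    (Δ : Ω → Type u) [∀ ω, AddCommGroup (Δ ω)] [∀ ω, Module Λ (Δ ω)]
    {M : Type u} [AddCommGroup M] [Module Λ M]

/-- product model of a layer -/
abbrev LayP (i : ℕ) (m : Ω → ℕ) : Type (max u v) :=
  ∀ ω : {ω : Ω // heightFun ω = i}, (Fin (m ω.1) → Δ ω.1)

/-- one more summand -/
lemma layP_add (i : ℕ) (m : Ω → ℕ) (ω₀ : Ω) (h₀ : heightFun ω₀ = i) :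
    ∃ m' : Ω → ℕ, Nonempty ((LayP Δ i m × Δ ω₀) ≃ₗ[Λ] LayP Δ i m') := by
  classical
  let m' : Ω → ℕ := fun ω => m ω + if ω = ω₀ then 1 else 0
  have h1 : 0 < if ω₀ = ω₀ then 1 else 0 := by simp
  let T : LayP Δ i m' →ₗ[Λ] (LayP Δ i m × Δ ω₀) :=
    { toFun := fun x => (fun ω k => x ω (Fin.castAdd _ k), x ⟨ω₀, h₀⟩ (Fin.natAdd (m ω₀) ⟨0, h1⟩))
      map_add' := fun x y => rfl
      map_smul' := fun c x => rfl }
  have hT : Function.Bijective T := by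
    constructor
    · rw [injective_iff_map_eq_zero]
      intro x hx
      have e1 : ∀ ω k, x ω (Fin.castAdd _ k) = 0 := fun ω k =>
        congrFun (congrFun (congrArg Prod.fst hx) ω) k
      have e2 : x ⟨ω₀, h₀⟩ (Fin.natAdd (m ω₀) ⟨0, h1⟩) = 0 := congrArg Prod.snd hx
      funext ω k
      obtain ⟨ω, hω⟩ := ω
      refine Fin.addCases (motive := fun k => x ⟨ω, hω⟩ k = 0) (fun k => e1 _ k) (fun k => ?_) k
      by_cases h : ω = ω₀
      · subst h
        have : k = ⟨0, h1⟩ := by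
          apply Fin.ext
          have := k.2
          simp at this
          simp [this]
        rw [this]
        exact e2
      · have := k.2
        simp [h] at this
    · rintro ⟨p, q⟩
      refine ⟨fun ω => Fin.addCases (p ω)
        (fun _ => if h : ω₀ = ω.1 then cast (congrArg Δ h) q else 0), ?_⟩
      refine Prod.ext ?_ ?_
      · funext ω k
        simp [T]
      · simp only [T, LinearMap.coe_mk, AddHom.coe_mk, Fin.addCases_right]
        simp
  exact ⟨m', ⟨(LinearEquiv.ofBijective T hT).symm⟩⟩

/-- `N / N'` is a layer of height `i`. -/
def Lay (i : ℕ) (N N' : Submodule Λ M) : Prop :=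
  ∃ (m : Ω → ℕ) (φ : N →ₗ[Λ] LayP Δ i m), Function.Surjective φ ∧ ∀ x : N, φ x = 0 ↔ (x : M) ∈ N'

/-- `N` has a filtration with layers `i, …, a`. -/
inductive HF (a : ℕ) : ℕ → Submodule Λ M → Prop
  | bot : HF a (a + 1) ⊥
  | step (i : ℕ) (N N' : Submodule Λ M) (hi : i ≤ a) (hle : N' ≤ N) (hl : Lay Δ i N N')
      (h : HF a (i + 1) N') : HF a i N

lemma HF_bot (a k : ℕ) : ∀ i, i + k = a + 1 → HF Δ a i (⊥ : Submodule Λ M) := by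
  induction k with
  | zero => intro i hi; obtain rfl : i = a + 1 := by omega
            exact HF.bot
  | succ k ih =>
    intro i hi
    refine HF.step i ⊥ ⊥ (by omega) le_rfl ⟨fun _ => 0, 0, ?_, ?_⟩ (ih _ (by omega))
    · intro y
      exact ⟨0, by funext ω k; exact k.elim0⟩
    · intro x
      simp

lemma HF_extend (hs : IsHomologicalSystem Λ Δ) (a : ℕ) (ω : Ω) (ha : heightFun ω ≤ a)
    {i : ℕ} {N : Submodule Λ M} (hN : HF Δ a i N) :
    ∀ (N' : Submodule Λ M), N ≤ N' → ∀ g : N' →ₗ[Λ] Δ ω, Function.Surjective g →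
      (∀ x : N', g x = 0 ↔ (x : M) ∈ N) → i ≤ heightFun ω → HF Δ a i N' := by
  induction hN with
  | bot => intros; omega
  | step i N N₁ hi hle hl h ih =>
    intro N' hNN' g hg hgk hiω
    obtain ⟨m, φ, hφ, hφk⟩ := hl
    have key : ∀ (ω' : {ω : Ω // heightFun ω = i}) (k : Fin (m ω'.1)),
        ∃ ψ : N' →ₗ[Λ] Δ ω'.1, ∀ x : N, ψ (Submodule.inclusion hNN' x) = φ x ω' k := by
      intro ω' k
      refine extend_hom (hs.hs4 ω ω'.1 ?_) (Submodule.inclusion hNN') g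
        (Submodule.inclusion_injective _) hg ?_
        ((LinearMap.proj k ∘ₗ LinearMap.proj ω') ∘ₗ φ)
      · rintro hlt
        have h1 := heightFun_lt (lt_iff_le_not_ge.2 hlt)
        have h2 := ω'.2
        omega
      · intro x
        rw [hgk]
        constructor
        · intro hx
          exact ⟨⟨x, hx⟩, rfl⟩
        · rintro ⟨y, rfl⟩
          exact y.2
    choose ψ' hψ' using key
    let ψ : N' →ₗ[Λ] LayP Δ i m := LinearMap.pi fun ω' => LinearMap.pi fun k => ψ' ω' k
    have hψ : ∀ x : N, ψ (Submodule.inclusion hNN' x) = φ x := by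
      intro x
      funext ω' k
      exact hψ' ω' k x
    have hψ2 : ∀ (x : M) (hx : x ∈ N), ψ ⟨x, hNN' hx⟩ = φ ⟨x, hx⟩ := fun x hx => hψ ⟨x, hx⟩
    have hg2 : ∀ (x : M) (hx : x ∈ N), g ⟨x, hNN' hx⟩ = 0 := fun x hx => (hgk _).2 hx
    -- joint surjectivity
    have hjs : ∀ p q, ∃ x : N', ψ x = p ∧ g x = q := by
      intro p q
      obtain ⟨x, rfl⟩ := hg q
      obtain ⟨⟨y, hy⟩, hy'⟩ := hφ (p - ψ x)
      refine ⟨x + ⟨y, hNN' hy⟩, ?_, ?_⟩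
      · rw [map_add, hψ2 y hy, hy']; abel
      · rw [map_add, hg2 y hy, add_zero]
    have hjk : ∀ x : N', (ψ x = 0 ∧ g x = 0) ↔ (x : M) ∈ N₁ := by
      rintro ⟨x, hx⟩
      constructor
      · rintro ⟨h1, h2⟩
        have hxN : x ∈ N := (hgk _).1 h2
        rw [hψ2 x hxN] at h1
        exact (hφk _).1 h1
      · intro h1
        have hxN : x ∈ N := hle h1
        exact ⟨(hψ2 x hxN).trans ((hφk _).2 h1), hg2 x hxN⟩
    by_cases hiω' : heightFun ω = i
    · obtain ⟨m', ⟨e⟩⟩ := layP_add (Λ := Λ) Δ i m ω hiω'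
      refine HF.step i N' N₁ hi (hle.trans hNN') ⟨m', e.toLinearMap ∘ₗ ψ.prod g, ?_, ?_⟩ h
      · refine e.surjective.comp ?_
        rintro ⟨p, q⟩
        obtain ⟨x, h1, h2⟩ := hjs p q
        exact ⟨x, Prod.ext h1 h2⟩
      · intro x
        rw [← hjk]
        simp
    · let X : Submodule Λ M := (LinearMap.ker ψ).map N'.subtype
      have hXmem : ∀ x : N', (x : M) ∈ X ↔ ψ x = 0 := by
        intro x
        simp [X]
      have hXle : X ≤ N' := Submodule.map_subtype_le _ _
      refine HF.step i N' X hi hXle ⟨m, ψ, ?_, fun x => (hXmem x).symm⟩ ?_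
      · intro p
        obtain ⟨x, h1, _⟩ := hjs p 0
        exact ⟨x, h1⟩
      · refine ih X ?_ (g ∘ₗ Submodule.inclusion hXle) ?_ ?_ (by omega)
        · intro x hx
          exact (hXmem ⟨x, hNN' (hle hx)⟩).2 ((hjk ⟨x, hNN' (hle hx)⟩).2 hx).1
        · intro q
          obtain ⟨x, h1, h2⟩ := hjs 0 q
          exact ⟨⟨x, (hXmem x).2 h1⟩, h2⟩
        · rintro ⟨x, hx⟩
          have h1 := (hXmem ⟨x, hXle hx⟩).1 hx
          have h2 := hjk ⟨x, hXle hx⟩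
          rw [← h2]
          exact ⟨fun h => ⟨h1, h⟩, fun h => h.2⟩

lemma HF_extract (a : ℕ) {i : ℕ} {N : Submodule Λ M} (hN : HF Δ a i N) :
    ∃ (W : ℕ → Submodule Λ M) (n : Ω → ℕ), W (a + 1) = ⊥ ∧ W i = N ∧
      (∀ j, i ≤ j → j ≤ a → W (j + 1) ≤ W j) ∧
      ∀ j, i ≤ j → j ≤ a → ∃ φ : W j →ₗ[Λ] LayP Δ j n,
        Function.Surjective φ ∧ ∀ x : W j, φ x = 0 ↔ (x : M) ∈ W (j + 1) := by
  classical
  induction hN with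
  | bot => exact ⟨fun _ => ⊥, fun _ => 0, rfl, rfl, fun _ _ _ => le_rfl, by intros; omega⟩
  | step i N N₁ hi hle hl h ih =>
    obtain ⟨W, n, hb, hW, hmono, hlay⟩ := ih
    obtain ⟨m, φ, hφ, hφk⟩ := hl
    let W' : ℕ → Submodule Λ M := fun j => if j = i then N else W j
    let n' : Ω → ℕ := fun ω => if heightFun ω = i then m ω else n ω
    have hWi : W' i = N := by simp [W']
    have hWj : ∀ j, j ≠ i → W' j = W j := fun j hj => by simp [W', hj]
    refine ⟨W', n', ?_, hWi, ?_, ?_⟩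
    · rw [hWj _ (by omega), hb]
    · intro j hij hja
      rw [hWj (j + 1) (by omega)]
      by_cases hj : j = i
      · subst hj
        rw [hWi, hW]; exact hle
      · rw [hWj j hj]
        exact hmono j (by omega) hja
    · intro j hij hja
      rw [hWj (j + 1) (by omega)]
      have tr : ∀ (n₁ : Ω → ℕ), (∀ ω, heightFun ω = j → n' ω = n₁ ω) →
          Nonempty (LayP Δ j n₁ ≃ₗ[Λ] LayP Δ j n') := by
        intro n₁ h
        exact ⟨LinearEquiv.piCongrRight fun ω =>
          LinearEquiv.funCongrLeft Λ _ (finCongr (h ω.1 ω.2))⟩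
      by_cases hj : j = i
      · subst hj
        rw [hWi, hW]
        obtain ⟨e⟩ := tr m (fun ω h => by simp [n', h])
        exact ⟨e.toLinearMap ∘ₗ φ, e.surjective.comp hφ, fun x => by simp [← hφk]⟩
      · rw [hWj j hj]
        obtain ⟨φ, hφ, hφk⟩ := hlay j (by omega) hja
        obtain ⟨e⟩ := tr n (fun ω h => by simp [n', h, hj])
        exact ⟨e.toLinearMap ∘ₗ φ, e.surjective.comp hφ, fun x => by simp [← hφk]⟩

end HF

/-- Proposition 8, existence: if `{1, …, a}` is the image of the height function `h` and
`M ∈ 𝔉(Δ)`, then `M` admits an `h`-filtration `0 = W (a+1) ⊆ W a ⊆ ⋯ ⊆ W 1 = M` whose layer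
`W i / W (i+1)` is a direct sum of copies of the `Δ ω` with `h ω = i`. -/
theorem exists_hFiltration
    {R : Type u} [CommRing R] [IsArtinianRing R]
    {Λ : Type u} [Ring Λ] [Algebra R Λ] [Module.Finite R Λ]
    {Ω : Type v} [Preorder Ω] [Fintype Ω] [Nonempty Ω]
    (Δ : Ω → Type u) [∀ ω, AddCommGroup (Δ ω)] [∀ ω, Module Λ (Δ ω)]
    (hs : IsHomologicalSystem Λ Δ)
    (a : ℕ) (hIm : Set.range (fun ω : Ω => heightFun ω) = Set.Icc 1 a)
    (M : Type u) [AddCommGroup M] [Module Λ M] [Module.Finite Λ M]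
    (hM : MemFiltCat Λ Δ M) :
    ∃ (W : ℕ → Submodule Λ M) (n : Ω → ℕ), IsHFiltration Λ Δ a W n := by
  classical
  have hrange : ∀ ω : Ω, 1 ≤ heightFun ω ∧ heightFun ω ≤ a := by
    intro ω
    have : heightFun ω ∈ Set.Icc 1 a := hIm ▸ ⟨ω, rfl⟩
    exact this
  obtain ⟨t, F, h0, h1, hmono, hq⟩ := hM
  have hF : ∀ k : Fin (t + 1), HF Δ a 1 (F k) := by
    intro k
    induction k using Fin.induction with
    | zero => rw [h0]; exact HF_bot Δ a a 1 (by omega)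
    | succ k ih =>
      obtain ⟨ω, ⟨e⟩⟩ := hq k
      refine HF_extend Δ hs a ω (hrange ω).2 ih (F k.succ)
        (hmono Fin.castSucc_lt_succ).le (e.toLinearMap ∘ₗ Submodule.mkQ _) ?_ ?_ (hrange ω).1
      · exact e.surjective.comp (Submodule.mkQ_surjective _)
      · intro x
        simp
  obtain ⟨W, n, hb, hW, hm, hl⟩ := HF_extract Δ a (hF (Fin.last t))
  refine ⟨W, n, hb, hW.trans h1, hm, fun i hi hia => ?_⟩
  obtain ⟨φ, hφ, hφk⟩ := hl i hi hia
  have hker : (W (i + 1)).comap (W i).subtype = LinearMap.ker φ := by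
    ext x
    simp [hφk]
  exact ⟨(Submodule.quotEquivOfEq _ _ hker).trans ((φ.quotKerEquivOfSurjective hφ).trans
    (DirectSum.linearEquivFunOnFintype Λ _ _).symm)⟩
end

section
/- Let (Δ; Ω, ≤) be a homological system over an Artin algebra Λ with height function h, let {1, 2, …, a} be the image of h, and let M ∈ F(Δ). If {0} = W_{a+1} ⊆ W_a ⊆ ⋯ ⊆ W_1 = M and {0} = W'_{a+1} ⊆ W'_a ⊆ ⋯ ⊆ W'_1 = M are two h-filtrations of M, with W_i/W_{i+1} ≅ ⨁_{ω: h(ω)=i} n_ω Δ_ω and W'_i/W'_{i+1} ≅ ⨁_{ω: h(ω)=i} n'_ω Δ_ω, then n_ω = n'_ω for every ω ∈ Ω. -/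
universe u v

open DirectSum

section Helpers

theorem aux_end_isUnit_or {Λ : Type u} [Ring Λ] {D : Type u} [AddCommGroup D] [Module Λ D]
    [IsArtinian Λ D] [IsNoetherian Λ D]
    (hind : ∀ A B : Submodule Λ D, IsCompl A B → A = ⊥ ∨ B = ⊥)
    (f g : Module.End Λ D) (hfg : f + g = 1) : IsUnit f ∨ IsUnit g := by
  obtain ⟨k, hk⟩ := Filter.eventually_atTop.mp (LinearMap.eventually_isCompl_ker_pow_range_pow f)
  have h := hk (k + 1) (by omega)
  rcases hind _ _ h with h0 | h0
  · left
    rw [LinearMap.ker_eq_bot] at h0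
    have hinj : Function.Injective f := by
      intro x y hxy
      apply h0
      simp [pow_succ, Module.End.mul_apply, hxy]
    exact (Module.End.isUnit_iff f).mpr (IsArtinian.bijective_of_injective_endomorphism f hinj)
  · right
    rw [LinearMap.range_eq_bot] at h0
    have : g = 1 - f := by rw [← hfg]; abel
    rw [this]
    exact IsNilpotent.isUnit_one_sub ⟨_, h0⟩

theorem aux_isLocalRing {Λ : Type u} [Ring Λ] {D : Type u} [AddCommGroup D] [Module Λ D]
    [IsArtinian Λ D] [IsNoetherian Λ D] [Nontrivial D]
    (hind : ∀ A B : Submodule Λ D, IsCompl A B → A = ⊥ ∨ B = ⊥) :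
    IsLocalRing (Module.End Λ D) :=
  ⟨fun {a b} h => aux_end_isUnit_or hind a b h⟩

theorem aux_mem_jacobson {Λ : Type u} [Ring Λ] {D : Type u} [AddCommGroup D] [Module Λ D]
    [IsArtinian Λ D] [IsLocalRing (Module.End Λ D)] (x : Module.End Λ D) (hx : ¬ IsUnit x) :
    x ∈ (⊥ : Ideal (Module.End Λ D)).jacobson := by
  rw [Ideal.mem_jacobson_iff]
  intro y
  have hyx : ¬ IsUnit (-(y * x)) := by
    intro h
    rw [IsUnit.neg_iff, Module.End.isUnit_iff] at h
    apply hx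
    rw [Module.End.isUnit_iff]
    apply IsArtinian.bijective_of_injective_endomorphism
    exact Function.Injective.of_comp (f := y) h.1
  have h1 : IsUnit (1 + y * x) :=
    (IsLocalRing.isUnit_or_isUnit_of_add_one (a := 1 + y * x) (b := -(y * x))
      (by abel)).resolve_right hyx
  obtain ⟨z, hz⟩ := h1.exists_left_inv
  refine ⟨z, ?_⟩
  rw [Ideal.mem_bot, mul_assoc, ← hz]
  noncomm_ring

theorem aux_one_sub_inj {Λ : Type u} [Ring Λ] {D : Type u} [AddCommGroup D] [Module Λ D]
    [IsArtinian Λ D] [IsLocalRing (Module.End Λ D)] (n : ℕ)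
    (g : Module.End Λ (Fin n → D))
    (hg : ∀ i j, ¬ IsUnit ((LinearMap.proj i ∘ₗ g ∘ₗ LinearMap.single Λ (fun _ => D) j :
      D →ₗ[Λ] D) : Module.End Λ D)) :
    Function.Injective (1 - g : Module.End Λ (Fin n → D)) := by
  have hm : endVecRingEquivMatrixEnd (Fin n) Λ D g ∈
      ((⊥ : Ideal (Module.End Λ D)).matrix (Fin n)).jacobson := by
    apply Ideal.matrix_jacobson_le
    rw [Ideal.mem_matrix]
    intro i j
    exact aux_mem_jacobson _ (hg i j)
  rw [Ideal.matrix_bot, Ideal.mem_jacobson_iff] at hm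
  obtain ⟨z, hz⟩ := hm (-1)
  rw [Ideal.mem_bot] at hz
  obtain ⟨z, rfl⟩ := (endVecRingEquivMatrixEnd (Fin n) Λ D).surjective z
  have h1 : z * (1 - g) = 1 := by
    apply (endVecRingEquivMatrixEnd (Fin n) Λ D).injective
    rw [map_mul, map_sub, map_one, ← sub_eq_zero, ← hz]
    noncomm_ring
  intro x y hxy
  have h2 : ∀ w, z ((1 - g : Module.End Λ (Fin n → D)) w) = w := fun w => by
    rw [← Module.End.mul_apply, h1]; rfl
  rw [← h2 x, hxy, h2]

theorem aux_comp_not_isUnit {Λ : Type u} [Ring Λ] {D D' : Type u} [AddCommGroup D] [Module Λ D]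
    [AddCommGroup D'] [Module Λ D'] [Nontrivial D]
    (hind : ∀ A B : Submodule Λ D', IsCompl A B → A = ⊥ ∨ B = ⊥)
    (hne : IsEmpty (D ≃ₗ[Λ] D')) (a : D →ₗ[Λ] D') (b : D' →ₗ[Λ] D) :
    ¬ IsUnit (b ∘ₗ a : Module.End Λ D) := by
  intro h
  rw [Module.End.isUnit_iff] at h
  have hc : IsCompl (LinearMap.range a) (LinearMap.ker b) := by
    constructor
    · rw [Submodule.disjoint_def]
      rintro _ ⟨x, rfl⟩ hx
      have : (b ∘ₗ a) x = (b ∘ₗ a) 0 := by simpa using hx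
      rw [h.1 this, map_zero]
    · rw [codisjoint_iff, eq_top_iff]
      intro y _
      obtain ⟨x, hx⟩ := h.2 (b y)
      rw [Submodule.mem_sup]
      refine ⟨a x, ⟨x, rfl⟩, y - a x, ?_, by abel⟩
      rw [LinearMap.mem_ker, map_sub, ← hx]
      simp
  rcases hind _ _ hc with h0 | h0
  · rw [LinearMap.range_eq_bot] at h0
    subst h0
    obtain ⟨x, y, hxy⟩ := exists_pair_ne D
    exact hxy (h.1 (by simp))
  · rw [LinearMap.ker_eq_bot] at h0
    have hs : Function.Surjective b := Function.Surjective.of_comp (g := a) h.2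
    exact hne.false (LinearEquiv.ofBijective b ⟨h0, hs⟩).symm

theorem aux_KS {Λ : Type u} [Ring Λ] {ι : Type v} [Finite ι]
    (D : ι → Type u) [∀ i, AddCommGroup (D i)] [∀ i, Module Λ (D i)]
    [∀ i, IsArtinian Λ (D i)] [∀ i, IsNoetherian Λ (D i)] [∀ i, Nontrivial (D i)]
    (hind : ∀ i (A B : Submodule Λ (D i)), IsCompl A B → A = ⊥ ∨ B = ⊥)
    (hne : ∀ i j, i ≠ j → IsEmpty (D i ≃ₗ[Λ] D j))
    (n n' : ι → ℕ)
    (e : (⨁ i, (Fin (n i) → D i)) ≃ₗ[Λ] (⨁ i, (Fin (n' i) → D i))) (w : ι) :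
    n w ≤ n' w := by
  classical
  have := Fintype.ofFinite ι
  have := aux_isLocalRing (hind w)
  let α := DirectSum.lof Λ ι (fun i => Fin (n i) → D i) w
  let p := DirectSum.component Λ ι (fun i => Fin (n i) → D i) w
  let α' := fun t => DirectSum.lof Λ ι (fun i => Fin (n' i) → D i) t
  let p' := fun t => DirectSum.component Λ ι (fun i => Fin (n' i) → D i) t
  let u : (Fin (n w) → D w) →ₗ[Λ] (Fin (n' w) → D w) := p' w ∘ₗ e.toLinearMap ∘ₗ α
  let N : ι → Module.End Λ (Fin (n w) → D w) := fun t =>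
    (p ∘ₗ e.symm.toLinearMap ∘ₗ α' t) ∘ₗ (p' t ∘ₗ e.toLinearMap ∘ₗ α)
  have hsum : ∀ y, ∑ t, α' t (p' t y) = y := by
    intro y
    apply DirectSum.ext_component Λ
    intro i
    rw [map_sum, Finset.sum_eq_single i]
    · exact DirectSum.component.lof_self _ _ _
    · intro j _ hj
      simp only [α']
      rw [DirectSum.component.of, dif_neg hj]
    · simp
  have hN : ∑ t, N t = 1 := by
    ext1 j
    ext1 x
    simp only [LinearMap.comp_apply, LinearMap.sum_apply, N, ← map_sum, Module.End.one_apply]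
    erw [hsum]
    simp only [LinearEquiv.coe_coe, LinearEquiv.symm_apply_apply]
    exact DirectSum.component.lof_self _ _ _
  have hN' : N w = 1 - ∑ t ∈ Finset.univ.erase w, N t := by
    rw [← hN, ← Finset.add_sum_erase _ _ (Finset.mem_univ w)]; abel
  have hinj : Function.Injective (N w) := by
    rw [hN']
    apply aux_one_sub_inj
    intro i j hu
    have heq : (LinearMap.proj i ∘ₗ (∑ t ∈ Finset.univ.erase w, N t) ∘ₗ
        LinearMap.single Λ (fun _ => D w) j : Module.End Λ (D w)) =
        ∑ t ∈ Finset.univ.erase w, ∑ k : Fin (n' t),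
          ((LinearMap.proj i ∘ₗ (p ∘ₗ e.symm.toLinearMap ∘ₗ α' t) ∘ₗ
            LinearMap.single Λ (fun _ => D t) k) ∘ₗ
          (LinearMap.proj k ∘ₗ (p' t ∘ₗ e.toLinearMap ∘ₗ α) ∘ₗ
            LinearMap.single Λ (fun _ => D w) j) : Module.End Λ (D w)) := by
      ext x
      simp only [LinearMap.comp_apply, LinearMap.sum_apply, LinearMap.proj_apply,
        Finset.sum_apply, N]
      refine Finset.sum_congr rfl fun t _ => ?_
      rw [← Finset.sum_apply, ← map_sum, ← map_sum, ← map_sum]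
      simp only [LinearMap.coe_single]
      rw [Finset.univ_sum_single (M := fun _ : Fin (n' t) => D t)]
    rw [heq] at hu
    obtain ⟨t, ht, hu⟩ := IsLocalRing.exists_of_isUnit_sum hu
    obtain ⟨k, _, hu⟩ := IsLocalRing.exists_of_isUnit_sum hu
    exact aux_comp_not_isUnit (hind t) (hne _ _ (Finset.ne_of_mem_erase ht).symm) _ _ hu
  have hu : Function.Injective u := Function.Injective.of_comp (f := p ∘ₗ e.symm.toLinearMap ∘ₗ α' w) hinj
  have hl := Module.length_le_of_injective u hu
  rw [Module.length_pi, Module.length_pi] at hl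
  simp only [ENat.card_eq_coe_fintype_card, Fintype.card_fin] at hl
  have h0 : Module.length Λ (D w) ≠ 0 := Module.length_pos.ne'
  have h1 : Module.length Λ (D w) ≠ ⊤ := Module.length_ne_top
  lift Module.length Λ (D w) to ℕ using h1 with l
  norm_cast at hl h0
  exact Nat.le_of_mul_le_mul_right hl (Nat.pos_of_ne_zero h0)

theorem aux_height_mono {Ω : Type v} [Preorder Ω] [Fintype Ω] {x y : Ω} (h : x ≤ y) :
    heightFun x ≤ heightFun y := by
  unfold heightFun
  rw [← Order.height_eq_iSup_last_eq, ← Order.height_eq_iSup_last_eq]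
  gcongr
  · intro ht
    rw [Order.height_eq_top_iff] at ht
    obtain ⟨p, -, hp⟩ := ht (Fintype.card Ω)
    have := p.length_lt_card
    omega

theorem aux_hom_zero {Λ : Type u} [Ring Λ] {Ω : Type v} [Preorder Ω] [Fintype Ω]
    (Δ : Ω → Type u) [∀ ω, AddCommGroup (Δ ω)] [∀ ω, Module Λ (Δ ω)]
    (hs : IsHomologicalSystem Λ Δ) (a : ℕ)
    (M : Type u) [AddCommGroup M] [Module Λ M]
    (W : ℕ → Submodule Λ M) (n : Ω → ℕ) (hW : IsHFiltration Λ Δ a W n) (ω : Ω)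
    (k : ℕ) (hk1 : 1 ≤ k) (hk : heightFun ω < k) (hka : k ≤ a + 1) :
    ∀ f : W k →ₗ[Λ] Δ ω, f = 0 := by
  classical
  obtain ⟨hb, ht, hle, hq⟩ := hW
  induction hka using Nat.decreasingInduction with
  | self =>
    intro f
    ext ⟨x, hx⟩
    rw [hb, Submodule.mem_bot] at hx
    subst hx
    exact map_zero f
  | of_succ k hka ih =>
    intro f
    have hka' : k ≤ a := by omega
    have ih := ih (by omega) (by omega) (f ∘ₗ Submodule.inclusion (hle k hk1 hka'))
    obtain ⟨e⟩ := hq k hk1 hka'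
    let g := ((W (k + 1)).comap (W k).subtype).liftQ f (by
      rintro ⟨x, hx⟩ hx'
      exact LinearMap.congr_fun ih ⟨x, hx'⟩)
    have hg : g ∘ₗ e.symm.toLinearMap = 0 := by
      apply DirectSum.linearMap_ext
      intro τ
      apply LinearMap.pi_ext'
      intro j
      by_contra hne
      have := aux_height_mono (hs.hs3 τ.1 ω _ hne)
      have := τ.2
      omega
    ext x
    have := LinearMap.congr_fun hg (e (Submodule.Quotient.mk x))
    simpa [g] using this

theorem aux_le {Λ : Type u} [Ring Λ] {Ω : Type v} [Preorder Ω] [Fintype Ω]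
    (Δ : Ω → Type u) [∀ ω, AddCommGroup (Δ ω)] [∀ ω, Module Λ (Δ ω)]
    (hs : IsHomologicalSystem Λ Δ) (a : ℕ)
    (M : Type u) [AddCommGroup M] [Module Λ M]
    (W W' : ℕ → Submodule Λ M) (n n' : Ω → ℕ) (hW : IsHFiltration Λ Δ a W n)
    (hW' : IsHFiltration Λ Δ a W' n')
    (k : ℕ) (hk1 : 1 ≤ k) (hka : k ≤ a + 1) (j : ℕ) (hj : 1 ≤ j) (hjk : j ≤ k) :
    W k ≤ W' j := by
  induction j, hj using Nat.le_induction with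
  | base => rw [hW'.2.1]; exact le_top
  | succ j hj ih =>
    have ih := ih (by omega)
    obtain ⟨e⟩ := hW'.2.2.2 j hj (by omega)
    have hz : e.toLinearMap ∘ₗ ((W' (j + 1)).comap (W' j).subtype).mkQ ∘ₗ
        Submodule.inclusion ih = 0 := by
      ext x : 1
      apply DirectSum.ext_component Λ
      intro τ
      funext i
      have := aux_hom_zero Δ hs a M W n hW τ.1 k hk1 (by have := τ.2; omega) hka
        (LinearMap.proj i ∘ₗ DirectSum.component Λ _ _ τ ∘ₗ e.toLinearMap ∘ₗ
          ((W' (j + 1)).comap (W' j).subtype).mkQ ∘ₗ Submodule.inclusion ih)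
      exact LinearMap.congr_fun this x
    intro x hx
    have h1 := LinearMap.congr_fun hz ⟨x, hx⟩
    simp only [LinearMap.comp_apply, LinearEquiv.coe_coe, LinearMap.zero_apply,
      LinearEquiv.map_eq_zero_iff, Submodule.mkQ_apply, Submodule.Quotient.mk_eq_zero] at h1
    exact h1

end Helpers

/-- Proposition 8, uniqueness of multiplicities: the coefficients `n ω` of an `h`-filtration
of `M ∈ 𝔉(Δ)` do not depend on the chosen `h`-filtration. -/
theorem hFiltration_multiplicities_unique
    {R : Type u} [CommRing R] [IsArtinianRing R]
    {Λ : Type u} [Ring Λ] [Algebra R Λ] [Module.Finite R Λ]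
    {Ω : Type v} [Preorder Ω] [Fintype Ω] [Nonempty Ω]
    (Δ : Ω → Type u) [∀ ω, AddCommGroup (Δ ω)] [∀ ω, Module Λ (Δ ω)]
    (hs : IsHomologicalSystem Λ Δ)
    (a : ℕ) (hIm : Set.range (fun ω : Ω => heightFun ω) = Set.Icc 1 a)
    (M : Type u) [AddCommGroup M] [Module Λ M] [Module.Finite Λ M]
    (hM : MemFiltCat Λ Δ M)
    (W W' : ℕ → Submodule Λ M) (n n' : Ω → ℕ)
    (hW : IsHFiltration Λ Δ a W n) (hW' : IsHFiltration Λ Δ a W' n') :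
    ∀ ω : Ω, n ω = n' ω := by
  classical
  have : IsArtinianRing Λ := IsArtinianRing.of_finite R Λ
  have := hs.fg
  have := hs.nontrivial
  have hWW : ∀ k, 1 ≤ k → k ≤ a + 1 → W k = W' k := fun k h1 h2 => le_antisymm
    (aux_le Δ hs a M W W' n n' hW hW' k h1 h2 k h1 le_rfl)
    (aux_le Δ hs a M W' W n' n hW' hW k h1 h2 k h1 le_rfl)
  intro ω
  have hω : heightFun ω ∈ Set.Icc 1 a := hIm ▸ ⟨ω, rfl⟩
  obtain ⟨e⟩ := hW.2.2.2 _ hω.1 hω.2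
  obtain ⟨e'⟩ := hW'.2.2.2 _ hω.1 hω.2
  rw [← hWW _ hω.1 (by have := hω.2; omega), ← hWW _ (by omega) (by have := hω.2; omega)] at e'
  have hne : ∀ i j : {τ : Ω // heightFun τ = heightFun ω}, i ≠ j →
      IsEmpty (Δ i.1 ≃ₗ[Λ] Δ j.1) :=
    fun i j hij => hs.pairwise_nonIso _ _ fun h => hij (Subtype.ext h)
  apply le_antisymm
  · exact aux_KS (fun i : {τ : Ω // heightFun τ = heightFun ω} => Δ i.1)
      (fun i => hs.indecomposable i.1) hne (fun i => n i.1) (fun i => n' i.1)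
      (e.symm.trans e') ⟨ω, rfl⟩
  · exact aux_KS (fun i : {τ : Ω // heightFun τ = heightFun ω} => Δ i.1)
      (fun i => hs.indecomposable i.1) hne (fun i => n' i.1) (fun i => n i.1)
      (e'.symm.trans e) ⟨ω, rfl⟩
end

section
/- Let (Δ; Ω, ≤) be a homological system over an Artin algebra Λ, let M ∈ F(Δ), and let F and F' be two Δ-filtrations of M. Then ℓ_ω(F) = ℓ_ω(F') for every ω ∈ Ω; in particular, the multiplicity ℓ_ω(M) of Δ_ω among the filtration factors, the Δ-length, and the number of Δ-factors of M are well defined, independent of the choice of Δ-filtration. -/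
universe u v

open DirectSum

def DFilt (Λ : Type u) [Ring Λ] {Ω : Type v}
    (Δ : Ω → Type u) [∀ ω, AddCommGroup (Δ ω)] [∀ ω, Module Λ (Δ ω)] :
    List Ω → (M : Type u) → [AddCommGroup M] → [Module Λ M] → Prop
  | [], M, _, _ => Subsingleton M
  | ω :: l, M, _, _ => ∃ g : M →ₗ[Λ] Δ ω, Function.Surjective g ∧ DFilt Λ Δ l (LinearMap.ker g)

section helpers

variable {Λ : Type u} [Ring Λ] {Ω : Type v}
    {Δ : Ω → Type u} [∀ ω, AddCommGroup (Δ ω)] [∀ ω, Module Λ (Δ ω)]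

/-- build a step from an exact sequence -/
theorem DFilt.congr (l : List Ω) : ∀ (M M' : Type u) [AddCommGroup M] [Module Λ M]
    [AddCommGroup M'] [Module Λ M'] (_ : M ≃ₗ[Λ] M'), DFilt Λ Δ l M → DFilt Λ Δ l M' := by
  induction l with
  | nil =>
    intro M M' _ _ _ _ e h
    have : Subsingleton M := h
    exact e.symm.toEquiv.subsingleton
  | cons ω l ih =>
    intro M M' _ _ _ _ e h
    obtain ⟨g, hg, hk⟩ := h
    refine ⟨g.comp e.symm.toLinearMap, hg.comp e.symm.surjective, ?_⟩
    refine ih _ _ (e.ofSubmodules _ _ ?_) hk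
    ext x
    simp [Submodule.mem_map_equiv]

theorem DFilt.mk_cons {l : List Ω} {ω : Ω} {N M : Type u} [AddCommGroup M] [Module Λ M]
    [AddCommGroup N] [Module Λ N] (f : N →ₗ[Λ] M) (g : M →ₗ[Λ] Δ ω)
    (hf : Function.Injective f) (hg : Function.Surjective g)
    (h : LinearMap.range f = LinearMap.ker g) (hN : DFilt Λ Δ l N) :
    DFilt Λ Δ (ω :: l) M :=
  ⟨g, hg, DFilt.congr l _ _ ((LinearEquiv.ofInjective f hf).trans (LinearEquiv.ofEq _ _ h)) hN⟩

theorem DFilt.splits (B : Type u) [AddCommGroup B] [Module Λ B] (l : List Ω) :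
    (∀ ω ∈ l, EverySESSplits Λ (Δ ω) B) →
    ∀ (N : Type u) [AddCommGroup N] [Module Λ N], DFilt Λ Δ l N → EverySESSplits Λ N B := by
  induction l with
  | nil =>
    intro _ N _ _ h E _ _ f g hf hg hfg
    have : Subsingleton N := h
    have hinj : Function.Injective g := by
      rw [← LinearMap.ker_eq_bot, ← hfg, LinearMap.range_eq_bot]
      ext x
      simp [Subsingleton.elim x 0]
    refine ⟨(LinearEquiv.ofBijective g ⟨hinj, hg⟩).symm.toLinearMap, ?_⟩
    ext x
    exact LinearEquiv.apply_symm_apply (LinearEquiv.ofBijective g ⟨hinj, hg⟩) x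
  | cons ω l ih =>
    intro hl N _ _ h E _ _ f g hf hg hfg
    obtain ⟨p, hp, hk⟩ := h
    have hgf : ∀ n, g (f n) = 0 := fun n => by
      have : f n ∈ LinearMap.ker g := hfg ▸ ⟨n, rfl⟩
      exact this
    set L : Submodule Λ E := (LinearMap.ker p).map f with hL
    have hLg : L ≤ LinearMap.ker g := by
      rintro _ ⟨n, _, rfl⟩
      exact hgf n
    let e := p.quotKerEquivOfSurjective hp
    let f' : Δ ω →ₗ[Λ] E ⧸ L :=
      ((LinearMap.ker p).mapQ L f (Submodule.le_comap_map _ _)).comp e.symm.toLinearMap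
    have hf'p : ∀ n, f' (p n) = L.mkQ (f n) := by
      intro n
      have : e.symm (p n) = (LinearMap.ker p).mkQ n := by
        rw [LinearEquiv.symm_apply_eq]; rfl
      simp [f', this]
    have h1 := hl ω (by simp) (E ⧸ L) f' (L.liftQ g hLg) ?_ ?_ ?_
    rotate_left
    · rw [← LinearMap.ker_eq_bot, LinearMap.ker_eq_bot']
      intro m hm
      obtain ⟨n, rfl⟩ := hp m
      rw [hf'p, Submodule.mkQ_apply, Submodule.Quotient.mk_eq_zero] at hm
      obtain ⟨n', hn', h⟩ := hm
      rw [← hf h]; exact hn'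
    · intro b
      obtain ⟨x, rfl⟩ := hg b
      exact ⟨L.mkQ x, by simp⟩
    · ext x
      obtain ⟨x, rfl⟩ := L.mkQ_surjective x
      constructor
      · rintro ⟨y, hy⟩
        obtain ⟨n, rfl⟩ := hp y
        rw [← hy, hf'p]
        simp [hgf]
      · intro hx
        have hx : x ∈ LinearMap.ker g := by simpa using hx
        rw [← hfg] at hx
        obtain ⟨n, rfl⟩ := hx
        exact ⟨p n, hf'p n⟩
    obtain ⟨s, hs⟩ := h1
    have hs' : ∀ b, L.liftQ g hLg (s b) = b := fun b => LinearMap.congr_fun hs b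
    let E'' : Submodule Λ E := (LinearMap.range s).comap L.mkQ
    have h2 := ih (fun ω' h' => hl ω' (by simp [h'])) (LinearMap.ker p) hk E''
      ((f.comp (LinearMap.ker p).subtype).codRestrict E'' ?_) (g.comp E''.subtype) ?_ ?_ ?_
    rotate_left
    · intro c
      have : L.mkQ (f c) = 0 := by
        rw [Submodule.mkQ_apply, Submodule.Quotient.mk_eq_zero]
        exact ⟨c, c.2, rfl⟩
      change L.mkQ (f c) ∈ LinearMap.range s
      rw [this]; exact zero_mem _
    · intro a b hab
      exact Subtype.ext (hf (congrArg Subtype.val hab))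
    · intro b
      obtain ⟨x, hx⟩ := L.mkQ_surjective (s b)
      refine ⟨⟨x, b, hx.symm⟩, ?_⟩
      have := hs' b
      rw [← hx] at this
      simpa using this
    · ext ⟨x, hx⟩
      constructor
      · rintro ⟨c, hc⟩
        have : f c = x := congrArg Subtype.val hc
        change g x = 0
        rw [← this, hgf]
      · intro h
        have h0 : g x = 0 := h
        obtain ⟨b, hb⟩ := hx
        have h3 := hs' b
        rw [hb] at h3
        have h4 : g x = b := by simpa using h3
        have hb0 : b = 0 := h4.symm.trans h0
        rw [hb0, map_zero] at hb
        have h5 : x ∈ L := by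
          rw [← Submodule.Quotient.mk_eq_zero]; exact hb.symm
        obtain ⟨n, hn, hx⟩ := h5
        exact ⟨⟨n, hn⟩, Subtype.ext hx⟩
    obtain ⟨s2, h2⟩ := h2
    exact ⟨E''.subtype.comp s2, h2⟩

theorem DFilt.hom_right (X : Type u) [AddCommGroup X] [Module Λ X] (l : List Ω) :
    (∀ ω ∈ l, ∀ f : X →ₗ[Λ] Δ ω, f = 0) →
    ∀ (N : Type u) [AddCommGroup N] [Module Λ N], DFilt Λ Δ l N → ∀ f : X →ₗ[Λ] N, f = 0 := by
  induction l with
  | nil =>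
    intro _ N _ _ h f
    have : Subsingleton N := h
    ext x
    exact Subsingleton.elim _ _
  | cons ω l ih =>
    intro hl N _ _ h f
    obtain ⟨p, hp, hk⟩ := h
    have h1 := hl ω (by simp) (p.comp f)
    have h2 := ih (fun ω' h' => hl ω' (by simp [h'])) _ hk
      (f.codRestrict _ (fun c => LinearMap.congr_fun h1 c))
    ext x
    exact congrArg Subtype.val (LinearMap.congr_fun h2 x)

theorem DFilt.hom_left (X : Type u) [AddCommGroup X] [Module Λ X] (l : List Ω) :
    (∀ ω ∈ l, ∀ f : Δ ω →ₗ[Λ] X, f = 0) →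
    ∀ (N : Type u) [AddCommGroup N] [Module Λ N], DFilt Λ Δ l N → ∀ f : N →ₗ[Λ] X, f = 0 := by
  induction l with
  | nil =>
    intro _ N _ _ h f
    have : Subsingleton N := h
    ext x
    rw [Subsingleton.elim x 0]; simp
  | cons ω l ih =>
    intro hl N _ _ h f
    obtain ⟨p, hp, hk⟩ := h
    have h2 := ih (fun ω' h' => hl ω' (by simp [h'])) _ hk (f.comp (LinearMap.ker p).subtype)
    have hle : LinearMap.ker p ≤ LinearMap.ker f := fun x hx =>
      LinearMap.congr_fun h2 ⟨x, hx⟩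
    have h1 := hl ω (by simp)
      (((LinearMap.ker p).liftQ f hle).comp (p.quotKerEquivOfSurjective hp).symm.toLinearMap)
    ext x
    have h3 := LinearMap.congr_fun h1 (p x)
    have : (p.quotKerEquivOfSurjective hp).symm (p x) = (LinearMap.ker p).mkQ x := by
      rw [LinearEquiv.symm_apply_eq]; rfl
    simpa [this] using h3

theorem DFilt.split (r : Ω → ℕ)
    (hE : ∀ ω ω', r ω' ≤ r ω → EverySESSplits Λ (Δ ω') (Δ ω)) (k : ℕ) (l : List Ω) :
    ∀ (M : Type u) [AddCommGroup M] [Module Λ M], DFilt Λ Δ l M →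
      ∃ A : Submodule Λ M, DFilt Λ Δ (l.filter (fun ω => k ≤ r ω)) A ∧
        DFilt Λ Δ (l.filter (fun ω => r ω < k)) (M ⧸ A) := by
  induction l with
  | nil =>
    intro M _ _ h
    have : Subsingleton M := h
    exact ⟨⊥, (inferInstance : Subsingleton (⊥ : Submodule Λ M)),
      (inferInstance : Subsingleton (M ⧸ (⊥ : Submodule Λ M)))⟩
  | cons ω l ih =>
    intro M _ _ h
    obtain ⟨g, hg, hk⟩ := h
    obtain ⟨A, hA, hB⟩ := ih _ hk
    set A1 : Submodule Λ M := A.map (LinearMap.ker g).subtype with hA1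
    have hA1g : A1 ≤ LinearMap.ker g := by
      rintro _ ⟨x, _, rfl⟩
      exact x.2
    let gb := A1.liftQ g hA1g
    have hgb : Function.Surjective gb := by
      intro b
      obtain ⟨x, rfl⟩ := hg b
      exact ⟨A1.mkQ x, by simp [gb]⟩
    let f : (LinearMap.ker g ⧸ A) →ₗ[Λ] M ⧸ A1 :=
      A.mapQ A1 (LinearMap.ker g).subtype (Submodule.le_comap_map _ _)
    have hf : Function.Injective f := by
      rw [← LinearMap.ker_eq_bot, LinearMap.ker_eq_bot']
      intro m hm
      obtain ⟨n, rfl⟩ := A.mkQ_surjective m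
      have hm : (Submodule.Quotient.mk (n : M) : M ⧸ A1) = 0 := hm
      rw [Submodule.Quotient.mk_eq_zero] at hm
      obtain ⟨n', hn', h⟩ := hm
      rw [Submodule.mkQ_apply, Submodule.Quotient.mk_eq_zero]
      rwa [← Subtype.ext h]
    have hfg : LinearMap.range f = LinearMap.ker gb := by
      ext x
      obtain ⟨x, rfl⟩ := A1.mkQ_surjective x
      constructor
      · rintro ⟨y, hy⟩
        obtain ⟨n, rfl⟩ := A.mkQ_surjective y
        rw [← hy]
        exact n.2
      · intro hx
        exact ⟨A.mkQ ⟨x, hx⟩, rfl⟩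
    by_cases hr : k ≤ r ω
    · have hr' : ¬ r ω < k := by omega
      simp only [List.filter_cons, hr, hr', decide_true, decide_false, if_true, Bool.false_eq_true, if_false]
      have hsp : EverySESSplits Λ (LinearMap.ker g ⧸ A) (Δ ω) := by
        refine DFilt.splits (Δ ω) _ ?_ _ hB
        intro ω' h'
        simp only [List.mem_filter, decide_eq_true_eq] at h'
        exact hE ω ω' (by omega)
      obtain ⟨s, hs⟩ := hsp _ f gb hf hgb hfg
      have hs' : ∀ b, gb (s b) = b := fun b => LinearMap.congr_fun hs b
      let A2 : Submodule Λ M := (LinearMap.range s).comap A1.mkQ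
      refine ⟨A2, ?_, ?_⟩
      · have hle : A1 ≤ A2 := by
          intro x hx
          have : A1.mkQ x = 0 := by rwa [Submodule.mkQ_apply, Submodule.Quotient.mk_eq_zero]
          change A1.mkQ x ∈ LinearMap.range s
          rw [this]; exact zero_mem _
        refine DFilt.mk_cons (Submodule.inclusion hle) (g.comp A2.subtype)
          (Submodule.inclusion_injective hle) ?_ ?_
          (DFilt.congr _ _ _ (Submodule.equivMapOfInjective _ (LinearMap.ker g).injective_subtype A) hA)
        · intro b
          obtain ⟨x, hx⟩ := A1.mkQ_surjective (s b)
          refine ⟨⟨x, b, hx.symm⟩, ?_⟩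
          have := hs' b
          rw [← hx] at this
          exact this
        · ext ⟨x, hx⟩
          constructor
          · rintro ⟨c, hc⟩
            have : (c : M) = x := congrArg Subtype.val hc
            change g x = 0
            rw [← this]; exact hA1g c.2
          · intro h
            have h0 : g x = 0 := h
            obtain ⟨b, hb⟩ := hx
            have h3 := hs' b
            rw [hb] at h3
            have h4 : g x = b := h3
            have hb0 : b = 0 := h4.symm.trans h0
            rw [hb0, map_zero] at hb
            have h5 : x ∈ A1 := by
              rw [← Submodule.Quotient.mk_eq_zero]; exact hb.symm
            exact ⟨⟨x, h5⟩, rfl⟩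
      · let q : M →ₗ[Λ] LinearMap.ker gb :=
          ((LinearMap.id - s.comp gb).codRestrict (LinearMap.ker gb)
            (fun c => by simp [hs'])).comp A1.mkQ
        have hqv : ∀ x, (q x : M ⧸ A1) = A1.mkQ x - s (gb (A1.mkQ x)) := fun x => rfl
        have hq : Function.Surjective q := by
          rintro ⟨y, hy⟩
          obtain ⟨x, rfl⟩ := A1.mkQ_surjective y
          refine ⟨x, Subtype.ext ?_⟩
          have hy : gb (A1.mkQ x) = 0 := hy
          rw [hqv, hy]; simp
        have hqk : LinearMap.ker q = A2 := by
          ext x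
          rw [LinearMap.mem_ker, ← Submodule.coe_eq_zero, hqv, sub_eq_zero]
          constructor
          · intro h
            exact ⟨_, h.symm⟩
          · rintro ⟨b, hb⟩
            rw [← hb, hs']
        exact DFilt.congr _ _ _ ((((LinearEquiv.ofInjective f hf).trans (LinearEquiv.ofEq _ _ hfg)).trans
          (q.quotKerEquivOfSurjective hq).symm).trans (Submodule.quotEquivOfEq _ _ hqk)) hB
    · have hr' : r ω < k := by omega
      simp only [List.filter_cons, hr, hr', decide_true, decide_false, if_true, Bool.false_eq_true, if_false]
      refine ⟨A1, DFilt.congr _ _ _ (Submodule.equivMapOfInjective _ (LinearMap.ker g).injective_subtype A) hA, ?_⟩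
      exact DFilt.mk_cons f gb hf hgb hfg hB

theorem DFilt.split_le (r : Ω → ℕ)
    (hH : ∀ ω ω' (f : Δ ω →ₗ[Λ] Δ ω'), r ω' < r ω → f = 0) (k : ℕ) (l l' : List Ω)
    (M : Type u) [AddCommGroup M] [Module Λ M] (A A' : Submodule Λ M)
    (h : DFilt Λ Δ (l.filter (fun ω => k ≤ r ω)) A)
    (h' : DFilt Λ Δ (l'.filter (fun ω => r ω < k)) (M ⧸ A')) : A ≤ A' := by
  have : A'.mkQ.comp A.subtype = 0 := by
    refine DFilt.hom_left _ _ ?_ _ h _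
    intro ω hω
    refine DFilt.hom_right _ _ ?_ _ h'
    intro ω' hω' f
    simp only [List.mem_filter, decide_eq_true_eq] at hω hω'
    exact hH _ _ _ (by omega)
  intro x hx
  rw [← Submodule.Quotient.mk_eq_zero]
  exact LinearMap.congr_fun this ⟨x, hx⟩

theorem DFilt.layer (r : Ω → ℕ)
    (hH : ∀ ω ω' (f : Δ ω →ₗ[Λ] Δ ω'), r ω' < r ω → f = 0)
    (hE : ∀ ω ω', r ω' ≤ r ω → EverySESSplits Λ (Δ ω') (Δ ω)) (k : ℕ) (l l' : List Ω)
    (M : Type u) [AddCommGroup M] [Module Λ M] (h : DFilt Λ Δ l M) (h' : DFilt Λ Δ l' M) :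
    ∃ (A : Submodule Λ M) (B : Submodule Λ A),
      DFilt Λ Δ ((l.filter (fun ω => k ≤ r ω)).filter (fun ω => r ω < k + 1)) (A ⧸ B) ∧
      DFilt Λ Δ ((l'.filter (fun ω => k ≤ r ω)).filter (fun ω => r ω < k + 1)) (A ⧸ B) := by
  obtain ⟨A, h1, h2⟩ := DFilt.split r hE k l M h
  obtain ⟨A', h1', h2'⟩ := DFilt.split r hE k l' M h'
  obtain rfl : A = A' := le_antisymm (DFilt.split_le r hH k _ _ M _ _ h1 h2')
    (DFilt.split_le r hH k _ _ M _ _ h1' h2)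
  obtain ⟨B, h3, h4⟩ := DFilt.split r hE (k + 1) _ A h1
  obtain ⟨B', h3', h4'⟩ := DFilt.split r hE (k + 1) _ A h1'
  obtain rfl : B = B' := le_antisymm (DFilt.split_le r hH (k + 1) _ _ _ _ _ h3 h4')
    (DFilt.split_le r hH (k + 1) _ _ _ _ _ h3' h4)
  exact ⟨A, B, h4, h4'⟩

end helpers

section mult

variable {Λ : Type u} [Ring Λ]

theorem end_fitting (X : Type u) [AddCommGroup X] [Module Λ X] [IsArtinian Λ X] [IsNoetherian Λ X]
    (hX : ∀ A B : Submodule Λ X, IsCompl A B → A = ⊥ ∨ B = ⊥) (a : Module.End Λ X) :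
    IsUnit a ∨ IsNilpotent a := by
  obtain ⟨n, hn⟩ := Filter.eventually_atTop.mp a.eventually_isCompl_ker_pow_range_pow
  rcases hX _ _ (hn (n + 1) (by omega)) with h | h
  · left
    rw [Module.End.isUnit_iff]
    have hi : Function.Injective (a ^ (n + 1)) := LinearMap.ker_eq_bot.mp h
    have : Function.Injective a := by
      rw [pow_succ] at hi
      exact Function.Injective.of_comp (f := ⇑(a ^ n)) hi
    exact IsArtinian.bijective_of_injective_endomorphism a this
  · right
    exact ⟨n + 1, LinearMap.range_eq_bot.mp h⟩

theorem end_local (X : Type u) [AddCommGroup X] [Module Λ X] [IsArtinian Λ X] [IsNoetherian Λ X]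
    (hX : ∀ A B : Submodule Λ X, IsCompl A B → A = ⊥ ∨ B = ⊥) (a : Module.End Λ X)
    (ha : a ∉ Ring.jacobson (Module.End Λ X)) : IsUnit a := by
  by_contra hu
  apply ha
  rw [Ring.jacobson_eq_sInf_isMaximal]
  have : sInf {I : Ideal (Module.End Λ X) | I.IsMaximal} = Ideal.jacobson ⊥ := by
    simp [Ideal.jacobson]
  rw [this, Ideal.mem_jacobson_iff]
  intro y
  have hnil : IsNilpotent (y * a) := by
    refine (end_fitting X hX (y * a)).resolve_left fun h => hu ?_
    rw [Module.End.isUnit_iff] at h ⊢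
    have hi : Function.Injective a := Function.Injective.of_comp (f := ⇑y) h.1
    exact IsArtinian.bijective_of_injective_endomorphism a hi
  obtain ⟨u, hu⟩ := hnil.isUnit_add_one
  refine ⟨↑u⁻¹, ?_⟩
  have : (↑u⁻¹ : Module.End Λ X) * (y * a + 1) = 1 := by rw [← hu]; simp
  rw [mul_add, ← mul_assoc, mul_one] at this
  rw [this]; simp

/-- The radical of `Hom (X, A)`. -/
def radHom (X A : Type u) [AddCommGroup X] [Module Λ X] [AddCommGroup A] [Module Λ A] :
    Submodule (Module.End Λ X)ᵈᵐᵃ (X →ₗ[Λ] A) where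
  carrier := {f | ∀ g : A →ₗ[Λ] X, (g.comp f : Module.End Λ X) ∈ Ring.jacobson (Module.End Λ X)}
  zero_mem' := fun g => by simp
  add_mem' := fun {a b} ha hb g => by
    rw [LinearMap.comp_add]; exact add_mem (ha g) (hb g)
  smul_mem' := fun c f hf g => by
    have : (g.comp (c • f) : Module.End Λ X) = (g.comp f : Module.End Λ X) * (DomMulAct.mk.symm c) := rfl
    rw [this]
    exact Ideal.mul_mem_right _ _ (hf g)

noncomputable def multHom (Λ : Type u) [Ring Λ] (X A : Type u) [AddCommGroup X] [Module Λ X]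
    [AddCommGroup A] [Module Λ A] : ℕ∞ :=
  Module.length (Module.End Λ X)ᵈᵐᵃ ((X →ₗ[Λ] A) ⧸ (radHom X A : Submodule (Module.End Λ X)ᵈᵐᵃ (X →ₗ[Λ] A)))

theorem length_quot_add {S H H1 H2 : Type u} [Ring S] [AddCommGroup H] [Module S H]
    [AddCommGroup H1] [Module S H1] [AddCommGroup H2] [Module S H2]
    (p : H →ₗ[S] H1) (q : H →ₗ[S] H2) (P : Submodule S H) (P1 : Submodule S H1)
    (P2 : Submodule S H2) (hsurj : ∀ a b, ∃ f, p f = a ∧ q f = b)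
    (hP : ∀ f, f ∈ P ↔ p f ∈ P1 ∧ q f ∈ P2) :
    Module.length S (H ⧸ P) = Module.length S (H1 ⧸ P1) + Module.length S (H2 ⧸ P2) := by
  let φ : H →ₗ[S] (H1 ⧸ P1) × (H2 ⧸ P2) := (P1.mkQ.comp p).prod (P2.mkQ.comp q)
  have hφ : Function.Surjective φ := by
    rintro ⟨a, b⟩
    obtain ⟨a, rfl⟩ := Submodule.mkQ_surjective _ a
    obtain ⟨b, rfl⟩ := Submodule.mkQ_surjective _ b
    obtain ⟨f, rfl, rfl⟩ := hsurj a b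
    exact ⟨f, rfl⟩
  have hk : LinearMap.ker φ = P := by
    ext f
    rw [hP, LinearMap.mem_ker, Prod.ext_iff]
    exact and_congr (Submodule.Quotient.mk_eq_zero _) (Submodule.Quotient.mk_eq_zero _)
  rw [← Module.length_prod, ← hk]
  exact (φ.quotKerEquivOfSurjective hφ).length_eq

theorem multHom_prod (X A N Y : Type u) [AddCommGroup X] [Module Λ X]
    [AddCommGroup A] [Module Λ A] [AddCommGroup N] [Module Λ N] [AddCommGroup Y] [Module Λ Y]
    (e : A ≃ₗ[Λ] N × Y) : multHom Λ X A = multHom Λ X N + multHom Λ X Y := by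
  let post (C D : Type u) [AddCommGroup C] [Module Λ C] [AddCommGroup D] [Module Λ D]
      (h : C →ₗ[Λ] D) : (X →ₗ[Λ] C) →ₗ[(Module.End Λ X)ᵈᵐᵃ] (X →ₗ[Λ] D) :=
    { toFun := fun f => h.comp f
      map_add' := fun a b => by rw [LinearMap.comp_add]
      map_smul' := fun c f => rfl }
  let p : A →ₗ[Λ] N := (LinearMap.fst Λ N Y).comp e.toLinearMap
  let q : A →ₗ[Λ] Y := (LinearMap.snd Λ N Y).comp e.toLinearMap
  let i : N →ₗ[Λ] A := e.symm.toLinearMap.comp (LinearMap.inl Λ N Y)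
  let j : Y →ₗ[Λ] A := e.symm.toLinearMap.comp (LinearMap.inr Λ N Y)
  have hij : ∀ x, i (p x) + j (q x) = x := by
    intro x
    simp [i, j, p, q, ← map_add]
  refine length_quot_add (post A N p) (post A Y q) _ _ _ ?_ ?_
  · intro a b
    refine ⟨i.comp a + j.comp b, ?_, ?_⟩
    · change p.comp (i.comp a + j.comp b) = a
      ext x; simp [p, i, j]
    · change q.comp (i.comp a + j.comp b) = b
      ext x; simp [q, i, j]
  · intro f
    constructor
    · intro h
      exact ⟨fun g => h (g.comp p), fun g => h (g.comp q)⟩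
    · rintro ⟨h1, h2⟩ g
      have : (g.comp f : Module.End Λ X) = (g.comp i).comp (p.comp f) + (g.comp j).comp (q.comp f) := by
        ext x
        simp only [LinearMap.comp_apply, LinearMap.add_apply, ← map_add, hij]
      rw [this]
      exact add_mem (h1 _) (h2 _)

theorem multHom_iso (X Y : Type u) [AddCommGroup X] [Module Λ X] [AddCommGroup Y] [Module Λ Y]
    [IsArtinian Λ X] [IsNoetherian Λ X] [Nontrivial X]
    (hX : ∀ A B : Submodule Λ X, IsCompl A B → A = ⊥ ∨ B = ⊥)
    (e : X ≃ₗ[Λ] Y) : multHom Λ X Y = 1 := by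
  unfold multHom
  rw [Module.length_eq_one_iff, isSimpleModule_iff_isCoatom]
  constructor
  · intro h
    have h1 : e.toLinearMap ∈ (radHom X Y : Submodule (Module.End Λ X)ᵈᵐᵃ (X →ₗ[Λ] Y)) := by
      rw [h]; trivial
    have h2 := h1 e.symm.toLinearMap
    have h3 : (e.symm.toLinearMap.comp e.toLinearMap : Module.End Λ X) = 1 := by
      ext x; simp
    rw [h3] at h2
    exact (Ring.jacobson_lt_top (Module.End Λ X)).ne ((Ideal.eq_top_iff_one _).mpr h2)
  · intro T hT
    obtain ⟨f, hfT, hf⟩ := SetLike.exists_of_lt hT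
    have : ∃ g : Y →ₗ[Λ] X, (g.comp f : Module.End Λ X) ∉ Ring.jacobson (Module.End Λ X) := by
      by_contra! h
      exact hf h
    obtain ⟨g, hg⟩ := this
    have hu := (Module.End.isUnit_iff _).mp (end_local X hX _ hg)
    have hfi : Function.Injective f := Function.Injective.of_comp (f := ⇑g) hu.1
    have hb : Function.Bijective (e.symm.toLinearMap.comp f) :=
      IsArtinian.bijective_of_injective_endomorphism _ (e.symm.injective.comp hfi)
    have hfs : Function.Surjective f := by
      intro y
      obtain ⟨x, hx⟩ := hb.2 (e.symm y)
      exact ⟨x, e.symm.injective hx⟩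
    let F := LinearEquiv.ofBijective f ⟨hfi, hfs⟩
    rw [eq_top_iff]
    intro h _
    have : h = (DomMulAct.mk (F.symm.toLinearMap.comp h : Module.End Λ X)) • f := by
      ext x
      exact (F.apply_symm_apply (h x)).symm
    rw [this]
    exact T.smul_mem _ hfT

theorem multHom_nonIso (X Y : Type u) [AddCommGroup X] [Module Λ X] [AddCommGroup Y] [Module Λ Y]
    [IsArtinian Λ X] [IsNoetherian Λ X] [Nontrivial X]
    (hX : ∀ A B : Submodule Λ X, IsCompl A B → A = ⊥ ∨ B = ⊥)
    (hY : ∀ A B : Submodule Λ Y, IsCompl A B → A = ⊥ ∨ B = ⊥)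
    (e : IsEmpty (X ≃ₗ[Λ] Y)) : multHom Λ X Y = 0 := by
  unfold multHom
  rw [Module.length_eq_zero_iff, Submodule.Quotient.subsingleton_iff, eq_top_iff]
  intro f _ g
  by_contra hg
  obtain ⟨u, hu⟩ := end_local X hX _ hg
  let g' : Y →ₗ[Λ] X := (↑u⁻¹ : Module.End Λ X).comp g
  have hgf : ∀ x, g' (f x) = x := by
    intro x
    have h1 : (↑u⁻¹ : Module.End Λ X) * (g.comp f : Module.End Λ X) = 1 := by rw [← hu]; simp
    exact LinearMap.congr_fun h1 x
  have hc : IsCompl (LinearMap.range f) (LinearMap.ker g') := by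
    refine IsCompl.of_eq ?_ ?_
    · rw [eq_bot_iff]
      rintro _ ⟨⟨x, rfl⟩, hx⟩
      have hx : g' (f x) = 0 := hx
      rw [hgf] at hx
      simp [hx]
    · rw [eq_top_iff]
      intro y _
      rw [Submodule.mem_sup]
      exact ⟨f (g' y), ⟨_, rfl⟩, y - f (g' y), by simp [hgf], by simp⟩
  rcases hY _ _ hc with h | h
  · rw [LinearMap.range_eq_bot] at h
    obtain ⟨x, hx⟩ := exists_ne (0 : X)
    apply hx
    rw [← hgf x, h]; simp
  · refine e.false (LinearEquiv.ofBijective g' ⟨LinearMap.ker_eq_bot.mp h, fun x => ⟨f x, hgf x⟩⟩).symm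

theorem prodEquiv_of_section {A Y : Type u} [AddCommGroup A] [Module Λ A]
    [AddCommGroup Y] [Module Λ Y] (g : A →ₗ[Λ] Y) (s : Y →ₗ[Λ] A) (h : g.comp s = LinearMap.id) :
    Nonempty (A ≃ₗ[Λ] LinearMap.ker g × Y) := by
  have h' : ∀ y, g (s y) = y := fun y => LinearMap.congr_fun h y
  refine ⟨LinearEquiv.symm (LinearEquiv.ofBijective ((LinearMap.ker g).subtype.coprod s) ⟨?_, ?_⟩)⟩
  · rw [← LinearMap.ker_eq_bot, LinearMap.ker_eq_bot']
    rintro ⟨⟨a, ha⟩, y⟩ h0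
    have h0 : a + s y = 0 := by simpa using h0
    have h1 := congrArg g h0
    have ha : g a = 0 := ha
    rw [map_add, ha, h', zero_add, map_zero] at h1
    subst h1
    have : a = 0 := by simpa using h0
    subst this
    rfl
  · intro a
    exact ⟨(⟨a - s (g a), by simp [h']⟩, g a), by simp⟩

variable {Ω : Type v}
    {Δ : Ω → Type u} [∀ ω, AddCommGroup (Δ ω)] [∀ ω, Module Λ (Δ ω)]

open Classical in
theorem DFilt.mult [Preorder Ω] [Fintype Ω] (hs : IsHomologicalSystem Λ Δ)
    (ω : Ω) [IsArtinian Λ (Δ ω)] [IsNoetherian Λ (Δ ω)] (l : List Ω) :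
    (∀ a ∈ l, ∀ b ∈ l, EverySESSplits Λ (Δ a) (Δ b)) →
    ∀ (M : Type u) [AddCommGroup M] [Module Λ M], DFilt Λ Δ l M →
      multHom Λ (Δ ω) M = (l.count ω : ℕ) := by
  have := hs.nontrivial ω
  induction l with
  | nil =>
    intro _ M _ _ h
    have : Subsingleton M := h
    have : Subsingleton (Δ ω →ₗ[Λ] M) := ⟨fun a b => by ext x; exact Subsingleton.elim _ _⟩
    unfold multHom
    rw [Module.length_eq_zero_iff.mpr]
    · simp
    · infer_instance
  | cons ω' l ih =>
    intro hl M _ _ h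
    obtain ⟨g, hg, hk⟩ := h
    have hsp := DFilt.splits (Δ ω') l (fun a ha => hl a (by simp [ha]) ω' (by simp)) _ hk
    obtain ⟨s, hs'⟩ := hsp M (LinearMap.ker g).subtype g (Submodule.injective_subtype _) hg
      (by simp)
    obtain ⟨e⟩ := prodEquiv_of_section g s hs'
    rw [multHom_prod _ _ _ _ e, ih (fun a ha b hb => hl a (by simp [ha]) b (by simp [hb])) _ hk,
      List.count_cons]
    by_cases hw : ω' = ω
    · subst hw
      rw [multHom_iso _ _ (hs.indecomposable _) (LinearEquiv.refl _ _)]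
      simp
    · rw [multHom_nonIso _ _ (hs.indecomposable _) (hs.indecomposable _)
        (hs.pairwise_nonIso _ _ (Ne.symm hw))]
      simp [hw]

theorem DFilt.ofFiltration {M : Type u} [AddCommGroup M] [Module Λ M] (t : ℕ) :
    ∀ (F : Fin (t + 1) → Submodule Λ M) (w : Fin t → Ω), F 0 = ⊥ → Monotone F →
    (∀ i, Nonempty ((F i.succ ⧸ (F i.castSucc).comap (F i.succ).subtype) ≃ₗ[Λ] Δ (w i))) →
    DFilt Λ Δ (List.ofFn w).reverse (F (Fin.last t)) := by
  induction t with
  | zero =>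
    intro F w h0 _ _
    change Subsingleton (F 0)
    rw [h0]; infer_instance
  | succ t ih =>
    intro F w h0 hm hw
    have h1 := ih (fun i => F i.castSucc) (fun i => w i.castSucc) h0
      (fun a b hab => hm (by simpa using hab)) (fun i => hw i.castSucc)
    rw [List.ofFn_succ', List.concat_eq_append, List.reverse_append]
    obtain ⟨e⟩ := hw (Fin.last t)
    have hle : F (Fin.last t).castSucc ≤ F (Fin.last t).succ := hm (Fin.castSucc_le_succ _)
    refine DFilt.mk_cons (M := F (Fin.last t).succ) (Submodule.inclusion hle)
      (e.toLinearMap.comp (Submodule.mkQ _)) (Submodule.inclusion_injective hle)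
      (e.surjective.comp (Submodule.mkQ_surjective _)) ?_ h1
    rw [LinearEquiv.ker_comp, Submodule.ker_mkQ, Submodule.range_inclusion]

open Classical in
theorem card_ofFn (t : ℕ) (w : Fin t → Ω) (ω : Ω) :
    Nat.card {i : Fin t // w i = ω} = (List.ofFn w).reverse.count ω := by
  rw [List.count_reverse, Nat.card_eq_fintype_card, Fintype.card_subtype]
  rw [← Multiset.coe_count, ← Fin.univ_val_map, Multiset.count_map]
  simp only [Finset.card, Finset.filter_val, eq_comm]

open Classical in
theorem exists_DFilt [Preorder Ω] [Fintype Ω] (hs : IsHomologicalSystem Λ Δ)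
    {M : Type u} [AddCommGroup M] [Module Λ M] (t : ℕ)
    (F : Fin (t + 1) → Submodule Λ M) (hF : IsDeltaFiltration Λ Δ t F) :
    ∃ l : List Ω, DFilt Λ Δ l M ∧ ∀ ω, ellOmega Λ Δ t F ω = l.count ω := by
  obtain ⟨h0, h1, hm, hw⟩ := hF
  choose w hw using hw
  refine ⟨(List.ofFn w).reverse, ?_, ?_⟩
  · have := DFilt.ofFiltration t F w h0 hm.monotone hw
    rw [h1] at this
    exact DFilt.congr _ _ _ Submodule.topEquiv this
  · intro ω
    rw [← card_ofFn]
    unfold ellOmega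
    refine Nat.card_congr (Equiv.subtypeEquivRight fun i => ⟨?_, ?_⟩)
    · rintro ⟨e⟩
      by_contra hne
      exact (hs.pairwise_nonIso _ _ hne).false ((hw i).some.symm.trans e)
    · rintro rfl
      exact hw i

end mult

/-- Corollary 9.1: any two `Δ`-filtrations `F`, `F'` of a module `M ∈ 𝔉(Δ)` have the same
multiplicities `ℓ_ω (F) = ℓ_ω (F')` for every `ω ∈ Ω`; in particular the `Δ`-length and the
number of `Δ`-factors of `M` are well defined. -/
theorem ellOmega_independent_of_filtration
    {R : Type u} [CommRing R] [IsArtinianRing R]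
    {Λ : Type u} [Ring Λ] [Algebra R Λ] [Module.Finite R Λ]
    {Ω : Type v} [Preorder Ω] [Fintype Ω] [Nonempty Ω]
    (Δ : Ω → Type u) [∀ ω, AddCommGroup (Δ ω)] [∀ ω, Module Λ (Δ ω)]
    (hs : IsHomologicalSystem Λ Δ)
    (M : Type u) [AddCommGroup M] [Module Λ M] [Module.Finite Λ M]
    (t t' : ℕ) (F : Fin (t + 1) → Submodule Λ M) (F' : Fin (t' + 1) → Submodule Λ M)
    (hF : IsDeltaFiltration Λ Δ t F) (hF' : IsDeltaFiltration Λ Δ t' F') :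
    ∀ ω : Ω, ellOmega Λ Δ t F ω = ellOmega Λ Δ t' F' ω := by
  classical
  intro ω
  have : IsArtinianRing Λ := IsArtinianRing.of_finite R Λ
  have := hs.fg ω
  have : IsArtinian Λ (Δ ω) := inferInstance
  have : IsNoetherian Λ (Δ ω) := inferInstance
  obtain ⟨l, hl, hc⟩ := exists_DFilt hs t F hF
  obtain ⟨l', hl', hc'⟩ := exists_DFilt hs t' F' hF'
  rw [hc, hc']
  let r : Ω → ℕ := fun a => (Finset.univ.filter (fun x => x < a)).card
  have hr1 : ∀ a b, a ≤ b → r a ≤ r b := fun a b hab =>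
    Finset.card_le_card fun x hx => by
      simp only [Finset.mem_filter, Finset.mem_univ, true_and] at hx ⊢
      exact lt_of_lt_of_le hx hab
  have hr2 : ∀ a b, a < b → r a < r b := fun a b hab =>
    Finset.card_lt_card (by
      rw [Finset.ssubset_iff_of_subset]
      · exact ⟨a, by simpa using hab, by simp⟩
      · intro x hx
        simp only [Finset.mem_filter, Finset.mem_univ, true_and] at hx ⊢
        exact lt_trans hx hab)
  have hH : ∀ a b (f : Δ a →ₗ[Λ] Δ b), r b < r a → f = 0 := by
    intro a b f h
    by_contra hf
    exact absurd (hr1 _ _ (hs.hs3 a b f hf)) (by omega)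
  have hE : ∀ a b, r b ≤ r a → EverySESSplits Λ (Δ b) (Δ a) := by
    intro a b h
    refine hs.hs4 a b fun h' => ?_
    exact absurd (hr2 a b (lt_iff_le_not_ge.mpr h')) (by omega)
  obtain ⟨A, B, h1, h2⟩ := DFilt.layer r hH hE (r ω) l l' M hl hl'
  have key : ∀ L : List Ω,
      DFilt Λ Δ ((L.filter (fun a => r ω ≤ r a)).filter (fun a => r a < r ω + 1)) (A ⧸ B) →
      multHom Λ (Δ ω) (A ⧸ B) = (L.count ω : ℕ) := by
    intro L hL
    rw [DFilt.mult hs ω _ ?_ _ hL, List.count_filter (by simp), List.count_filter (by simp)]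
    intro a ha b hb
    simp only [List.mem_filter, decide_eq_true_eq] at ha hb
    exact hE b a (by omega)
  have := (key l h1).symm.trans (key l' h2)
  exact_mod_cast this
end

section
/- Let (Δ; Ω, ≤) be a homological system over an Artin algebra Λ, let L, N ∈ F(Δ), and let 0 → L → M → N → 0 be a short exact sequence of Λ-modules. Then M ∈ F(Δ) and ℓ_ω(M) = ℓ_ω(L) + ℓ_ω(N) for every ω ∈ Ω. -/
universe u v

open DirectSum

section Helpers

variable {Λ : Type u} [Ring Λ] {Ω : Type v}
  (Δ : Ω → Type u) [∀ ω, AddCommGroup (Δ ω)] [∀ ω, Module Λ (Δ ω)]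

/-- Recursive version of filtrations: the list gives the factors, from the top to the bottom. -/
def Filt (Λ : Type u) [Ring Λ] {Ω : Type v}
    (Δ : Ω → Type u) [∀ ω, AddCommGroup (Δ ω)] [∀ ω, Module Λ (Δ ω)] :
    List Ω → ∀ (M : Type u) [AddCommGroup M] [Module Λ M], Prop
  | [], M, _, _ => Subsingleton M
  | a :: l, M, _, _ => ∃ g : M →ₗ[Λ] Δ a, Function.Surjective g ∧ Filt Λ Δ l (LinearMap.ker g)

theorem filt_equiv (l : List Ω) : ∀ {M M' : Type u} [AddCommGroup M] [Module Λ M]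
    [AddCommGroup M'] [Module Λ M'] (_ : M ≃ₗ[Λ] M'), Filt Λ Δ l M → Filt Λ Δ l M' := by
  induction l with
  | nil =>
    intro M M' _ _ _ _ e h
    have : Subsingleton M := h
    exact e.symm.injective.subsingleton
  | cons a l ih =>
    intro M M' _ _ _ _ e h
    obtain ⟨g, hg, hl⟩ := h
    refine ⟨g.comp e.symm.toLinearMap, hg.comp e.symm.surjective, ?_⟩
    refine ih ?_ hl
    refine LinearEquiv.ofSubmodules e _ _ ?_
    ext x
    simp only [Submodule.mem_map, LinearMap.mem_ker]
    constructor
    · rintro ⟨y, hy, rfl⟩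
      simpa using hy
    · intro hx
      exact ⟨e.symm x, hx, by simp⟩

theorem filt_of_inj {l : List Ω} {A A' B : Type u} [AddCommGroup A] [Module Λ A]
    [AddCommGroup A'] [Module Λ A'] [AddCommGroup B] [Module Λ B]
    (i : A →ₗ[Λ] B) (i' : A' →ₗ[Λ] B) (hi : Function.Injective i) (hi' : Function.Injective i')
    (h : ∀ b, (∃ a, i a = b) ↔ (∃ a, i' a = b)) (hA : Filt Λ Δ l A) : Filt Λ Δ l A' := by
  have hr : LinearMap.range i = LinearMap.range i' := by
    ext b
    simpa using h b
  exact filt_equiv Δ l ((LinearEquiv.ofInjective i hi).trans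
    ((LinearEquiv.ofEq _ _ hr).trans (LinearEquiv.ofInjective i' hi').symm)) hA

theorem filt_of_surj {l : List Ω} {A B B' : Type u} [AddCommGroup A] [Module Λ A]
    [AddCommGroup B'] [Module Λ B'] [AddCommGroup B] [Module Λ B]
    (p : A →ₗ[Λ] B) (p' : A →ₗ[Λ] B') (hp : Function.Surjective p) (hp' : Function.Surjective p')
    (h : ∀ a, p a = 0 ↔ p' a = 0) (hB : Filt Λ Δ l B) : Filt Λ Δ l B' := by
  have hr : LinearMap.ker p = LinearMap.ker p' := by
    ext b
    simpa using h b
  exact filt_equiv Δ l ((p.quotKerEquivOfSurjective hp).symm.trans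
    ((Submodule.quotEquivOfEq _ _ hr).trans (p'.quotKerEquivOfSurjective hp'))) hB

theorem filt_append {l : List Ω} (l' : List Ω) : ∀ {M N : Type u} [AddCommGroup M] [Module Λ M]
    [AddCommGroup N] [Module Λ N] (g : M →ₗ[Λ] N) (_ : Function.Surjective g)
    (_ : Filt Λ Δ l (LinearMap.ker g)), Filt Λ Δ l' N → Filt Λ Δ (l' ++ l) M := by
  induction l' with
  | nil =>
    intro M N _ _ _ _ g hg hl h
    have : Subsingleton N := h
    refine filt_of_inj Δ (LinearMap.ker g).subtype LinearMap.id (Submodule.subtype_injective _)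
      Function.injective_id ?_ hl
    intro b
    simp only [Submodule.coe_subtype, Subtype.exists, LinearMap.mem_ker, LinearMap.id_apply]
    exact ⟨fun _ => ⟨b, rfl⟩, fun _ => ⟨b, Subsingleton.elim _ _, rfl⟩⟩
  | cons a l' ih =>
    intro M N _ _ _ _ g hg hl h
    obtain ⟨k, hk, h'⟩ := h
    refine ⟨k.comp g, hk.comp hg, ?_⟩
    let r : LinearMap.ker (k.comp g) →ₗ[Λ] LinearMap.ker k :=
      LinearMap.restrict g (fun x hx => hx)
    have hr : ∀ x, (r x : N) = g x := fun x => rfl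
    refine ih r ?_ ?_ h'
    · rintro ⟨y, hy⟩
      obtain ⟨x, rfl⟩ := hg y
      exact ⟨⟨x, hy⟩, rfl⟩
    · refine filt_of_inj Δ (LinearMap.ker g).subtype
        ((LinearMap.ker (k.comp g)).subtype.comp (LinearMap.ker r).subtype)
        (Submodule.subtype_injective _)
        ((Submodule.subtype_injective _).comp (Submodule.subtype_injective _)) ?_ hl
      intro b
      constructor
      · rintro ⟨⟨x, hx⟩, rfl⟩
        have hx' : g x = 0 := hx
        exact ⟨⟨⟨x, by simp [hx']⟩, Subtype.ext hx'⟩, rfl⟩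
      · rintro ⟨⟨⟨x, hx⟩, hx2⟩, rfl⟩
        exact ⟨⟨x, congrArg Subtype.val hx2⟩, rfl⟩

theorem ext_extend {A B E : Type u} [AddCommGroup A] [Module Λ A]
    [AddCommGroup B] [Module Λ B] [AddCommGroup E] [Module Λ E]
    (hs : EverySESSplits Λ A B) (g : E →ₗ[Λ] B) (hg : Function.Surjective g)
    (h : LinearMap.ker g →ₗ[Λ] A) : ∃ k : E →ₗ[Λ] A, ∀ x : LinearMap.ker g, k x = h x := by
  let S : Submodule Λ (A × E) := LinearMap.range (h.prod (-(LinearMap.ker g).subtype))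
  let f : A →ₗ[Λ] ((A × E) ⧸ S) := S.mkQ.comp (LinearMap.inl Λ A E)
  let j : E →ₗ[Λ] ((A × E) ⧸ S) := S.mkQ.comp (LinearMap.inr Λ A E)
  let q : ((A × E) ⧸ S) →ₗ[Λ] B := S.liftQ (g.comp (LinearMap.snd Λ A E)) (by
    rintro _ ⟨x, rfl⟩
    simp)
  have hf : Function.Injective f := by
    rw [injective_iff_map_eq_zero]
    intro a ha
    have : ((a, 0) : A × E) ∈ S := (Submodule.Quotient.mk_eq_zero S).1 ha
    obtain ⟨x, hx⟩ := this
    have h1 : h x = a := congrArg Prod.fst hx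
    have h2 : -(x : E) = 0 := congrArg Prod.snd hx
    have h3 : x = 0 := Subtype.ext (by simpa using h2)
    rw [← h1, h3, map_zero]
  have hq : Function.Surjective q := by
    intro b
    obtain ⟨e, rfl⟩ := hg b
    exact ⟨j e, rfl⟩
  have hjf : ∀ x : LinearMap.ker g, j x = f (h x) := by
    intro x
    refine ((Submodule.Quotient.eq S).2 ?_).symm
    exact ⟨x, by simp⟩
  have hex : LinearMap.range f = LinearMap.ker q := by
    apply le_antisymm
    · rintro _ ⟨a, rfl⟩
      show g 0 = 0
      simp
    · intro y hy
      obtain ⟨⟨a, e⟩, rfl⟩ := S.mkQ_surjective y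
      have he : g e = 0 := hy
      refine ⟨a + h ⟨e, he⟩, ?_⟩
      rw [map_add, ← hjf]
      show S.mkQ (a, 0) + S.mkQ (0, e) = _
      rw [← map_add]
      simp
  obtain ⟨s, hs'⟩ := hs _ f q hf hq hex
  have hEx : Function.Exact f q := by
    rw [LinearMap.exact_iff]
    exact hex.symm
  have htf : (Function.Injective f ∧ ∃ l, q.comp l = LinearMap.id) ↔
      (Function.Surjective q ∧ ∃ l : ((A × E) ⧸ S) →ₗ[Λ] A, l.comp f = LinearMap.id) := hEx.split_tfae'.out 0 1
  obtain ⟨-, r, hr⟩ := htf.1 ⟨hf, s, hs'⟩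
  refine ⟨r.comp j, fun x => ?_⟩
  rw [LinearMap.comp_apply, hjf]
  exact LinearMap.congr_fun hr (h x)

theorem section_of_filt {B : Type u} [AddCommGroup B] [Module Λ B] (m : List Ω)
    (hm : ∀ a ∈ m, EverySESSplits Λ (Δ a) B) :
    ∀ {E : Type u} [AddCommGroup E] [Module Λ E] (g : E →ₗ[Λ] B) (_ : Function.Surjective g)
      (_ : Filt Λ Δ m (LinearMap.ker g)), ∃ s : B →ₗ[Λ] E, g.comp s = LinearMap.id := by
  induction m with
  | nil =>
    intro E _ _ g hg h
    have : Subsingleton (LinearMap.ker g) := h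
    have hinj : Function.Injective g := by
      rw [← LinearMap.ker_eq_bot]
      exact Submodule.eq_bot_of_subsingleton
    let e := LinearEquiv.ofBijective g ⟨hinj, hg⟩
    exact ⟨e.symm.toLinearMap, LinearMap.ext fun x => e.apply_symm_apply x⟩
  | cons a m ih =>
    intro E _ _ g hg h
    obtain ⟨p, hp, hpm⟩ := h
    obtain ⟨k, hk⟩ := ext_extend (hm a (by simp)) g hg p
    obtain ⟨s, hs⟩ := ih (fun b hb => hm b (by simp [hb]))
      (g.comp (LinearMap.ker k).subtype) (by
        intro y
        obtain ⟨e, rfl⟩ := hg y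
        obtain ⟨z, hz⟩ := hp (k e)
        refine ⟨⟨e - z, ?_⟩, ?_⟩
        · simp [hk, hz]
        · have : g z = 0 := z.2
          simp [this]) (by
        refine filt_of_inj Δ ((LinearMap.ker g).subtype.comp (LinearMap.ker p).subtype)
          ((LinearMap.ker k).subtype.comp (LinearMap.ker _).subtype)
          ((Submodule.subtype_injective _).comp (Submodule.subtype_injective _))
          ((Submodule.subtype_injective _).comp (Submodule.subtype_injective _)) ?_ hpm
        intro b
        constructor
        · rintro ⟨⟨x, hx2⟩, rfl⟩
          exact ⟨⟨⟨x, (hk x).trans hx2⟩, x.2⟩, rfl⟩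
        · rintro ⟨⟨⟨x, hx⟩, hx2⟩, rfl⟩
          exact ⟨⟨⟨x, hx2⟩, (hk ⟨x, hx2⟩).symm.trans hx⟩, rfl⟩)
    exact ⟨(LinearMap.ker k).subtype.comp s, hs⟩

theorem splits_of_filt {B X : Type u} [AddCommGroup B] [Module Λ B] [AddCommGroup X] [Module Λ X]
    (m : List Ω) (hm : ∀ a ∈ m, EverySESSplits Λ (Δ a) B) (hX : Filt Λ Δ m X) :
    EverySESSplits Λ X B := by
  intro E _ _ f g hf hg hfg
  refine section_of_filt Δ m hm g hg ?_
  refine filt_of_inj Δ f (LinearMap.ker g).subtype hf (Submodule.subtype_injective _) ?_ hX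
  intro b
  have : b ∈ LinearMap.range f ↔ b ∈ LinearMap.ker g := by rw [hfg]
  rw [LinearMap.mem_range] at this
  rw [this]
  exact ⟨fun h => ⟨⟨b, h⟩, rfl⟩, by rintro ⟨x, rfl⟩; exact x.2⟩

theorem filt_sort (P : Ω → Bool) (l : List Ω)
    (hl : ∀ a ∈ l, ∀ b ∈ l, P a = true → P b = false → EverySESSplits Λ (Δ a) (Δ b)) :
    ∀ {M : Type u} [AddCommGroup M] [Module Λ M], Filt Λ Δ l M →
      ∃ (X : Type u) (_ : AddCommGroup X) (_ : Module Λ X) (π : M →ₗ[Λ] X),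
        Function.Surjective π ∧ Filt Λ Δ (l.filter (fun x => !P x)) (LinearMap.ker π) ∧
          Filt Λ Δ (l.filter P) X := by
  induction l with
  | nil =>
    intro M _ _ h
    have : Subsingleton M := h
    refine ⟨M, inferInstance, inferInstance, LinearMap.id, Function.surjective_id, ?_, h⟩
    show Subsingleton _
    infer_instance
  | cons b m ih =>
    intro M _ _ h
    obtain ⟨g, hg, hm⟩ := h
    obtain ⟨X, _, _, π, hπ, hK, hX⟩ := ih (fun a ha b hb => hl a (by simp [ha]) b (by simp [hb])) hm
    cases hb : P b with
    | true =>
      rw [List.filter_cons_of_pos hb, List.filter_cons_of_neg (by simp [hb])]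
      let S := (LinearMap.ker π).map (LinearMap.ker g).subtype
      have hS : S ≤ LinearMap.ker g := by
        rintro _ ⟨x, _, rfl⟩
        exact x.2
      have hSm : ∀ x : LinearMap.ker g, (x : M) ∈ S ↔ π x = 0 := by
        intro x
        constructor
        · rintro ⟨y, hy, hyx⟩
          have : y = x := Subtype.ext hyx
          rw [← this]
          exact hy
        · intro hx
          exact ⟨x, hx, rfl⟩
      refine ⟨M ⧸ S, inferInstance, inferInstance, S.mkQ, S.mkQ_surjective, ?_, ?_⟩
      · refine filt_of_inj Δ ((LinearMap.ker g).subtype.comp (LinearMap.ker π).subtype)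
          (LinearMap.ker S.mkQ).subtype
          ((Submodule.subtype_injective _).comp (Submodule.subtype_injective _))
          (Submodule.subtype_injective _) ?_ hK
        intro y
        constructor
        · rintro ⟨⟨x, hx⟩, rfl⟩
          refine ⟨⟨x, ?_⟩, rfl⟩
          rw [Submodule.ker_mkQ]
          exact (hSm x).2 hx
        · rintro ⟨⟨x, hx⟩, rfl⟩
          rw [Submodule.ker_mkQ] at hx
          exact ⟨⟨⟨x, hS hx⟩, (hSm ⟨x, hS hx⟩).1 hx⟩, rfl⟩
      · refine ⟨S.liftQ g hS, ?_, ?_⟩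
        · intro y
          obtain ⟨x, rfl⟩ := hg y
          exact ⟨S.mkQ x, rfl⟩
        · refine filt_of_surj Δ π (LinearMap.restrict (q := LinearMap.ker (S.liftQ g hS)) S.mkQ
            (fun x hx => hx)) hπ ?_ ?_ hX
          · rintro ⟨y, hy⟩
            obtain ⟨x, rfl⟩ := S.mkQ_surjective y
            exact ⟨⟨x, hy⟩, rfl⟩
          · intro x
            rw [← hSm, ← Submodule.Quotient.mk_eq_zero S]
            exact ⟨fun h => Subtype.ext h, fun h => congrArg Subtype.val h⟩
    | false =>
      rw [List.filter_cons_of_neg (p := P) (by simp [hb]),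
        List.filter_cons_of_pos (p := fun x => !P x) (by simp [hb])]
      have hsp : EverySESSplits Λ X (Δ b) := by
        refine splits_of_filt Δ (m.filter P) ?_ hX
        intro a ha
        rw [List.mem_filter] at ha
        exact hl a (by simp [ha.1]) b (by simp) ha.2 hb
      obtain ⟨k, hk⟩ := ext_extend hsp g hg π
      refine ⟨X, inferInstance, inferInstance, k, ?_, ?_, hX⟩
      · intro x
        obtain ⟨y, rfl⟩ := hπ x
        exact ⟨y, hk y⟩
      · refine ⟨g.comp (LinearMap.ker k).subtype, ?_, ?_⟩
        · intro y
          obtain ⟨e, rfl⟩ := hg y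
          obtain ⟨z, hz⟩ := hπ (k e)
          refine ⟨⟨e - z, ?_⟩, ?_⟩
          · simp [hk, hz]
          · have : g z = 0 := z.2
            simp [this]
        · refine filt_of_inj Δ ((LinearMap.ker g).subtype.comp (LinearMap.ker π).subtype)
            ((LinearMap.ker k).subtype.comp (LinearMap.ker _).subtype)
            ((Submodule.subtype_injective _).comp (Submodule.subtype_injective _))
            ((Submodule.subtype_injective _).comp (Submodule.subtype_injective _)) ?_ hK
          intro b
          constructor
          · rintro ⟨⟨x, hx2⟩, rfl⟩
            exact ⟨⟨⟨x, (hk x).trans hx2⟩, x.2⟩, rfl⟩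
          · rintro ⟨⟨⟨x, hx⟩, hx2⟩, rfl⟩
            exact ⟨⟨⟨x, hx2⟩, (hk ⟨x, hx2⟩).symm.trans hx⟩, rfl⟩

theorem hom_zero_left {B : Type u} [AddCommGroup B] [Module Λ B] (l : List Ω)
    (hl : ∀ a ∈ l, ∀ f : Δ a →ₗ[Λ] B, f = 0) :
    ∀ {K : Type u} [AddCommGroup K] [Module Λ K] (_ : Filt Λ Δ l K) (f : K →ₗ[Λ] B) (x : K),
      f x = 0 := by
  induction l with
  | nil =>
    intro K _ _ h f x
    have : Subsingleton K := h
    rw [Subsingleton.elim x 0, map_zero]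
  | cons a l ih =>
    intro K _ _ h f x
    obtain ⟨g, hg, hm⟩ := h
    have h0 := ih (fun b hb => hl b (by simp [hb])) hm (f.comp (LinearMap.ker g).subtype)
    have hle : LinearMap.ker g ≤ LinearMap.ker f := fun y hy => h0 ⟨y, hy⟩
    have := hl a (by simp) (((LinearMap.ker g).liftQ f hle).comp
      (g.quotKerEquivOfSurjective hg).symm.toLinearMap)
    have h2 := LinearMap.congr_fun this (g x)
    have h3 : (g.quotKerEquivOfSurjective hg).symm (g x) = (LinearMap.ker g).mkQ x := by
      rw [LinearEquiv.symm_apply_eq]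
      rfl
    simpa [h3] using h2

theorem hom_zero {l l' : List Ω}
    (hl : ∀ a ∈ l, ∀ b ∈ l', ∀ f : Δ a →ₗ[Λ] Δ b, f = 0)
    {K : Type u} [AddCommGroup K] [Module Λ K] (hK : Filt Λ Δ l K) :
    ∀ {X : Type u} [AddCommGroup X] [Module Λ X] (_ : Filt Λ Δ l' X) (f : K →ₗ[Λ] X) (x : K),
      f x = 0 := by
  induction l' with
  | nil =>
    intro X _ _ h f x
    have : Subsingleton X := h
    exact Subsingleton.elim _ _
  | cons b l' ih =>
    intro X _ _ h f x
    obtain ⟨g, hg, hm⟩ := h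
    have h0 := hom_zero_left Δ l (fun a ha => hl a ha b (by simp)) hK (g.comp f)
    have := ih (fun a ha b hb => hl a ha b (by simp [hb])) hm (f.codRestrict _ h0) x
    exact congrArg Subtype.val this

theorem nilp_or_unit {A : Type u} [AddCommGroup A] [Module Λ A] [IsArtinian Λ A]
    [IsNoetherian Λ A] (hA : ∀ (S T : Submodule Λ A), IsCompl S T → S = ⊥ ∨ T = ⊥)
    (f : Module.End Λ A) : IsNilpotent f ∨ IsUnit f := by
  obtain ⟨n, hn⟩ := Filter.eventually_atTop.1 (LinearMap.eventually_isCompl_ker_pow_range_pow f)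
  have h := hn (n + 1) (by omega)
  rcases hA _ _ h with h1 | h1
  · right
    have h2 : LinearMap.range (f ^ (n + 1)) = ⊤ := by
      have := h.sup_eq_top
      rwa [h1, bot_sup_eq] at this
    have hu : IsUnit (f ^ (n + 1)) := by
      rw [Module.End.isUnit_iff]
      exact ⟨LinearMap.ker_eq_bot.1 h1, LinearMap.range_eq_top.1 h2⟩
    exact (isUnit_pow_iff (by omega)).1 hu
  · left
    exact ⟨n + 1, LinearMap.range_eq_bot.1 h1⟩

theorem unit_or_unit {A : Type u} [AddCommGroup A] [Module Λ A] [IsArtinian Λ A]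
    [IsNoetherian Λ A] (hA : ∀ (S T : Submodule Λ A), IsCompl S T → S = ⊥ ∨ T = ⊥)
    (f g : Module.End Λ A) (h : f + g = 1) : IsUnit f ∨ IsUnit g := by
  rcases nilp_or_unit hA f with h1 | h1
  · right
    rw [← eq_sub_iff_add_eq'] at h
    rw [h]
    exact h1.isUnit_one_sub
  · exact Or.inl h1

variable [Preorder Ω] [Fintype Ω]

theorem filt_exchange [IsArtinianRing Λ] (hs : IsHomologicalSystem Λ Δ) (α : Ω) (l : List Ω)
    (hl : ∀ a ∈ l, ∀ b ∈ l, EverySESSplits Λ (Δ a) (Δ b)) :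
    ∀ {X : Type u} [AddCommGroup X] [Module Λ X] (_ : Filt Λ Δ l X) (q : X →ₗ[Λ] Δ α)
      (s : Δ α →ₗ[Λ] X), q.comp s = LinearMap.id →
      ∃ m, l.Perm (α :: m) ∧ Filt Λ Δ m (LinearMap.ker q) := by
  have := hs.nontrivial α
  have := hs.fg α
  induction l with
  | nil =>
    intro X _ _ h q s hqs
    have : Subsingleton X := h
    exfalso
    obtain ⟨x, hx⟩ := exists_ne (0 : Δ α)
    apply hx
    have h2 : q (s x) = x := LinearMap.congr_fun hqs x
    rw [← h2, Subsingleton.elim (s x) 0, map_zero]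
  | cons γ m ih =>
    intro X _ _ h q s hqs
    have := hs.nontrivial γ
    obtain ⟨r, hr, hm⟩ := h
    obtain ⟨t, ht⟩ := section_of_filt Δ m (fun a ha => hl a (by simp [ha]) γ (by simp)) r hr hm
    have ht' : ∀ x, r (t x) = x := fun x => LinearMap.congr_fun ht x
    have hqs' : ∀ x, q (s x) = x := fun x => LinearMap.congr_fun hqs x
    let e : X →ₗ[Λ] LinearMap.ker r := (LinearMap.id - t.comp r).codRestrict _ (by
      intro x
      simp [ht'])
    have he : ∀ x, (e x : X) = x - t (r x) := fun x => rfl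
    let u : Module.End Λ (Δ α) := (q.comp t).comp (r.comp s)
    let w : Module.End Λ (Δ α) := (q.comp (LinearMap.ker r).subtype).comp (e.comp s)
    have huw : u + w = 1 := by
      ext x
      simp [u, w, he, hqs']
    rcases unit_or_unit (hs.indecomposable α) u w huw with hu | hw
    · -- the map `q ∘ t` is an isomorphism
      rw [Module.End.isUnit_iff] at hu
      have hsurj : Function.Surjective (q.comp t) := by
        intro y
        obtain ⟨x, hx⟩ := hu.2 y
        exact ⟨r (s x), hx⟩
      have hinj' : Function.Injective (r.comp s) := by
        intro x y hxy
        apply hu.1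
        show (q.comp t) ((r.comp s) x) = (q.comp t) ((r.comp s) y)
        rw [hxy]
      have hcompl : IsCompl (LinearMap.ker (q.comp t)) (LinearMap.range (r.comp s)) := by
        constructor
        · rw [disjoint_iff_inf_le]
          rintro _ ⟨hx, ⟨y, rfl⟩⟩
          have h0 : u y = 0 := hx
          have : y = 0 := hu.1 (by rw [h0, map_zero])
          rw [this, map_zero]
          exact Submodule.zero_mem _
        · rw [codisjoint_iff_le_sup]
          intro x _
          obtain ⟨y, hy⟩ := hu.2 ((q.comp t) x)
          have hy' : (q.comp t) ((r.comp s) y) = (q.comp t) x := hy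
          rw [Submodule.mem_sup]
          refine ⟨x - (r.comp s) y, ?_, (r.comp s) y, ⟨y, rfl⟩, by simp⟩
          rw [LinearMap.mem_ker, map_sub, hy', sub_self]
      have hinj : Function.Injective (q.comp t) := by
        rcases hs.indecomposable γ _ _ hcompl with h | h
        · exact LinearMap.ker_eq_bot.1 h
        · exfalso
          obtain ⟨x, hx⟩ := exists_ne (0 : Δ α)
          apply hx
          apply hinj'
          rw [LinearMap.range_eq_bot.1 h]
          rfl
      have hαγ : γ = α := by
        by_contra hne
        exact (hs.pairwise_nonIso γ α hne).elim (LinearEquiv.ofBijective _ ⟨hinj, hsurj⟩)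
      subst hαγ
      refine ⟨m, List.Perm.refl _, ?_⟩
      let R : Submodule Λ X := LinearMap.range t
      -- both kernels are isomorphic to `X / im t`
      have hmq : Filt Λ Δ m (X ⧸ R) := by
        refine filt_of_surj Δ e R.mkQ ?_ R.mkQ_surjective ?_ hm
        · intro y
          refine ⟨y, Subtype.ext ?_⟩
          have : r y = 0 := y.2
          simp [he, this]
        · intro x
          rw [Submodule.mkQ_apply, Submodule.Quotient.mk_eq_zero]
          constructor
          · intro hx
            have := congrArg Subtype.val hx
            rw [he] at this
            exact ⟨r x, (sub_eq_zero.1 this).symm⟩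
          · rintro ⟨y, rfl⟩
            apply Subtype.ext
            simp [he, ht']
      refine filt_equiv Δ m (LinearEquiv.ofBijective
        (R.mkQ.comp (LinearMap.ker q).subtype) ⟨?_, ?_⟩).symm hmq
      · rw [injective_iff_map_eq_zero]
        rintro ⟨x, hx⟩ hx0
        have hxR : x ∈ R := (Submodule.Quotient.mk_eq_zero R).1 hx0
        obtain ⟨y, rfl⟩ := hxR
        have hy : (q.comp t) y = 0 := hx
        have hy0 : y = 0 := hinj (by rw [hy, map_zero])
        apply Subtype.ext
        simp [hy0]
      · intro y
        obtain ⟨x, rfl⟩ := R.mkQ_surjective y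
        obtain ⟨z, hz⟩ := hsurj (q x)
        have hz' : q (t z) = q x := hz
        refine ⟨⟨x - t z, by simp [hz']⟩, ?_⟩
        refine (Submodule.Quotient.eq R).2 ?_
        exact ⟨-z, by simp⟩
    · have hwb := (Module.End.isUnit_iff _).1 hw
      let we : Δ α ≃ₗ[Λ] Δ α := LinearEquiv.ofBijective w hwb
      obtain ⟨m', hperm, hm'⟩ := ih
        (fun a ha b hb => hl a (by simp [ha]) b (by simp [hb])) hm
        (q.comp (LinearMap.ker r).subtype) ((e.comp s).comp we.symm.toLinearMap) (by
          ext x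
          exact we.apply_symm_apply x)
      refine ⟨γ :: m', (hperm.cons γ).trans (List.Perm.swap _ _ _), ?_⟩
      refine ⟨r.comp (LinearMap.ker q).subtype, ?_, ?_⟩
      · intro y
        obtain ⟨x, rfl⟩ := hr y
        obtain ⟨z, hz⟩ := hwb.2 (q x)
        have hz' : q (e (s z)) = q x := hz
        refine ⟨⟨x - e (s z), by rw [LinearMap.mem_ker, map_sub, hz', sub_self]⟩, ?_⟩
        have : r (e (s z)) = 0 := (e (s z)).2
        rw [LinearMap.comp_apply, Submodule.subtype_apply, map_sub, this, sub_zero]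
      · refine filt_of_inj Δ ((LinearMap.ker r).subtype.comp (LinearMap.ker _).subtype)
          ((LinearMap.ker q).subtype.comp (LinearMap.ker _).subtype)
          ((Submodule.subtype_injective _).comp (Submodule.subtype_injective _))
          ((Submodule.subtype_injective _).comp (Submodule.subtype_injective _)) ?_ hm'
        intro b
        constructor
        · rintro ⟨⟨⟨x, hx⟩, hx2⟩, rfl⟩
          exact ⟨⟨⟨x, hx2⟩, hx⟩, rfl⟩
        · rintro ⟨⟨⟨x, hx⟩, hx2⟩, rfl⟩
          exact ⟨⟨⟨x, hx2⟩, hx⟩, rfl⟩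

theorem filt_nil_unique (hs : IsHomologicalSystem Λ Δ) {X : Type u} [AddCommGroup X] [Module Λ X]
    [Subsingleton X] (l : List Ω) (h : Filt Λ Δ l X) : l = [] := by
  cases l with
  | nil => rfl
  | cons a l =>
    obtain ⟨g, hg, _⟩ := h
    have := hs.nontrivial a
    have := hg.nontrivial
    exact (not_subsingleton X inferInstance).elim

theorem filt_class_unique [IsArtinianRing Λ] (hs : IsHomologicalSystem Λ Δ) (l : List Ω) :
    ∀ (l' : List Ω)
    (_ : ∀ a ∈ l, ∀ b ∈ l, EverySESSplits Λ (Δ a) (Δ b))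
    (_ : ∀ a ∈ l', ∀ b ∈ l', EverySESSplits Λ (Δ a) (Δ b))
    {X : Type u} [AddCommGroup X] [Module Λ X] (_ : Filt Λ Δ l X) (_ : Filt Λ Δ l' X),
      l.Perm l' := by
  induction l with
  | nil =>
    intro l' _ _ X _ _ h h'
    have : Subsingleton X := h
    rw [filt_nil_unique Δ hs l' h']
  | cons α l ih =>
    intro l' hl hl' X _ _ h h'
    obtain ⟨q, hq, hm⟩ := h
    obtain ⟨s, hqs⟩ := section_of_filt Δ l (fun a ha => hl a (by simp [ha]) α (by simp)) q hq hm
    obtain ⟨m, hp, hm'⟩ := filt_exchange Δ hs α l' hl' h' q s hqs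
    refine List.Perm.trans ((ih m (fun a ha b hb => hl a (by simp [ha]) b (by simp [hb]))
      ?_ hm hm').cons α) hp.symm
    intro a ha b hb
    exact hl' a (hp.symm.subset (by simp [ha])) b (hp.symm.subset (by simp [hb]))

theorem filt_unique [IsArtinianRing Λ] (hs : IsHomologicalSystem Λ Δ) (n : ℕ) :
    ∀ (l l' : List Ω) (_ : (l ++ l').length ≤ n)
    {M : Type u} [AddCommGroup M] [Module Λ M] (_ : Filt Λ Δ l M) (_ : Filt Λ Δ l' M),
      l.Perm l' := by
  classical
  induction n with
  | zero =>
    intro l l' hn M _ _ _ _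
    have h0 : l ++ l' = [] := List.length_eq_zero_iff.1 (by omega)
    rw [List.append_eq_nil_iff] at h0
    rw [h0.1, h0.2]
  | succ n ih =>
    intro l l' hn M _ _ h h'
    by_cases h0 : l ++ l' = []
    · rw [List.append_eq_nil_iff] at h0
      rw [h0.1, h0.2]
    obtain ⟨α, hαmem, hα⟩ : ∃ α ∈ l ++ l', ∀ b ∈ l ++ l', ¬ b < α := by
      have hne : ({x | x ∈ l ++ l'} : Set Ω).Nonempty := List.exists_mem_of_ne_nil _ h0
      obtain ⟨α, h1⟩ := (Set.toFinite {x | x ∈ l ++ l'}).exists_minimal hne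
      exact ⟨α, h1.1, fun b hb hlt => h1.not_prop_of_lt hlt hb⟩
    let P : Ω → Bool := fun γ => decide (γ ≤ α)
    have hP : ∀ γ, P γ = true ↔ γ ≤ α := fun γ => by simp [P]
    have hP' : ∀ γ, P γ = false ↔ ¬ γ ≤ α := fun γ => by simp [P]
    have hsp : ∀ a b, P a = true → P b = false → EverySESSplits Λ (Δ a) (Δ b) := by
      intro a b ha hb
      rw [hP] at ha
      rw [hP'] at hb
      exact hs.hs4 b a (fun hab => hb (hab.1.trans ha))
    have hcl : ∀ a ∈ l ++ l', ∀ b ∈ l ++ l', P a = true → P b = true →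
        EverySESSplits Λ (Δ a) (Δ b) := by
      intro a ha b hb hPa hPb
      rw [hP] at hPa hPb
      refine hs.hs4 b a (fun hab => ?_)
      exact hα b hb (lt_of_lt_of_le (lt_of_le_not_ge hab.1 hab.2) hPa)
    have hhom : ∀ m m' : List Ω, ∀ a ∈ m.filter (fun x => !P x), ∀ b ∈ m'.filter P,
        ∀ f : Δ a →ₗ[Λ] Δ b, f = 0 := by
      intro m m' a ha b hb f
      by_contra hf
      have hab := hs.hs3 a b f hf
      rw [List.mem_filter] at ha hb
      have h1 : P a = false := by simpa using ha.2
      rw [hP'] at h1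
      exact h1 (hab.trans ((hP b).1 hb.2))
    obtain ⟨X, _, _, π, hπ, hK, hX⟩ := filt_sort Δ P l (fun a _ b _ => hsp a b) h
    obtain ⟨X', _, _, π', hπ', hK', hX'⟩ := filt_sort Δ P l' (fun a _ b _ => hsp a b) h'
    have hle : ∀ x, π x = 0 → π' x = 0 := fun x hx =>
      hom_zero Δ (hhom l l') hK hX' (π'.comp (LinearMap.ker π).subtype) ⟨x, hx⟩
    have hle' : ∀ x, π' x = 0 → π x = 0 := fun x hx =>
      hom_zero Δ (hhom l' l) hK' hX (π.comp (LinearMap.ker π').subtype) ⟨x, hx⟩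
    have hX2 : Filt Λ Δ (l'.filter P) X :=
      filt_of_surj Δ π' π hπ' hπ (fun x => ⟨hle' x, hle x⟩) hX'
    have hkk : LinearMap.ker π' = LinearMap.ker π := by
      ext x
      exact ⟨hle' x, hle x⟩
    have hK2 : Filt Λ Δ (l'.filter (fun x => !P x)) (LinearMap.ker π) :=
      filt_equiv Δ _ (LinearEquiv.ofEq _ _ hkk) hK'
    have p1 : (l.filter P).Perm (l'.filter P) := by
      refine filt_class_unique Δ hs _ _ ?_ ?_ hX hX2
      · intro a ha b hb
        rw [List.mem_filter] at ha hb
        exact hcl a (by simp [ha.1]) b (by simp [hb.1]) ha.2 hb.2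
      · intro a ha b hb
        rw [List.mem_filter] at ha hb
        exact hcl a (by simp [ha.1]) b (by simp [hb.1]) ha.2 hb.2
    have p2 : (l.filter (fun x => !P x)).Perm (l'.filter (fun x => !P x)) := by
      refine ih _ _ ?_ hK hK2
      rw [← List.filter_append]
      have : ((l ++ l').filter (fun x => !P x)).length < (l ++ l').length := by
        rw [List.length_filter_lt_length_iff_exists]
        exact ⟨α, hαmem, by simp [P]⟩
      omega
    exact (List.filter_append_perm P l).symm.trans
      ((p1.append p2).trans (List.filter_append_perm P l'))

theorem sum_eq_count {Ω : Type v} [DecidableEq Ω] (w : ℕ → Ω) (ω : Ω) (t : ℕ) :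
    (∑ i ∈ Finset.range t, if w i = ω then 1 else 0) = List.count ω (List.map w (List.range t)) := by
  induction t with
  | zero => simp
  | succ n ih =>
    rw [Finset.sum_range_succ, ih, List.range_succ, List.map_append, List.count_append]
    simp [List.count_singleton]

theorem filt_of_isDeltaFiltration [Nonempty Ω] [DecidableEq Ω] (hs : IsHomologicalSystem Λ Δ)
    {M : Type u} [AddCommGroup M] [Module Λ M] (t : ℕ) (F : Fin (t + 1) → Submodule Λ M)
    (hF : IsDeltaFiltration Λ Δ t F) :
    ∃ l : List Ω, Filt Λ Δ l M ∧ ∀ ω, ellOmega Λ Δ t F ω = l.count ω := by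
  obtain ⟨h0, h1, hmono, hw⟩ := hF
  choose w hw using hw
  let w' : ℕ → Ω := fun i => if h : i < t then w ⟨i, h⟩ else Classical.arbitrary Ω
  have key : ∀ n (h : n < t + 1), Filt Λ Δ ((List.range n).map w').reverse (F ⟨n, h⟩) := by
    intro n
    induction n with
    | zero =>
      intro h
      show Subsingleton (F 0)
      rw [h0]
      infer_instance
    | succ n ih =>
      intro h
      have hn : n < t := by omega
      have hw'n : w' n = w ⟨n, hn⟩ := dif_pos hn
      rw [List.range_succ, List.map_append, List.reverse_append]
      show Filt Λ Δ (w' n :: ((List.range n).map w').reverse) _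
      rw [hw'n]
      obtain ⟨e⟩ := hw ⟨n, hn⟩
      let A := F (Fin.succ ⟨n, hn⟩)
      let B := F (Fin.castSucc ⟨n, hn⟩)
      have hBA : B ≤ A := hmono.monotone (Fin.castSucc_lt_succ).le
      refine ⟨e.toLinearMap.comp (B.comap A.subtype).mkQ,
        e.surjective.comp (Submodule.mkQ_surjective _), ?_⟩
      refine filt_of_inj Δ B.subtype (A.subtype.comp (LinearMap.ker _).subtype)
        (Submodule.subtype_injective _)
        ((Submodule.subtype_injective _).comp (Submodule.subtype_injective _)) ?_ (ih (by omega))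
      have hker : LinearMap.ker (e.toLinearMap.comp (B.comap A.subtype).mkQ)
          = B.comap A.subtype := by
        rw [LinearEquiv.ker_comp, Submodule.ker_mkQ]
      intro b
      constructor
      · rintro ⟨x, rfl⟩
        refine ⟨⟨⟨x, hBA x.2⟩, ?_⟩, rfl⟩
        rw [hker]
        exact x.2
      · rintro ⟨⟨x, hx⟩, rfl⟩
        rw [hker] at hx
        exact ⟨⟨x, hx⟩, rfl⟩
  refine ⟨((List.range t).map w').reverse, ?_, ?_⟩
  · have := key t (by omega)
    have h1' : F ⟨t, by omega⟩ = ⊤ := h1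
    rw [h1'] at this
    exact filt_equiv Δ _ Submodule.topEquiv this
  · intro ω
    have hiff : ∀ i : Fin t, Nonempty ((F i.succ ⧸ (F i.castSucc).comap (F i.succ).subtype)
        ≃ₗ[Λ] Δ ω) ↔ w' i = ω := by
      intro i
      have : w' i = w i := dif_pos i.2
      rw [this]
      constructor
      · rintro ⟨e⟩
        by_contra hne
        obtain ⟨e'⟩ := hw i
        exact (hs.pairwise_nonIso _ _ hne).elim (e'.symm.trans e)
      · rintro rfl
        exact hw i
    unfold ellOmega
    rw [Nat.card_congr (Equiv.subtypeEquivRight hiff), Nat.card_eq_fintype_card,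
      Fintype.card_subtype, List.count_reverse]
    rw [Finset.card_filter, Fin.sum_univ_eq_sum_range (fun i => if w' i = ω then 1 else 0) t]
    exact sum_eq_count w' ω t

theorem memFiltCat_of_filt (hs : IsHomologicalSystem Λ Δ) (l : List Ω) :
    ∀ {M : Type u} [AddCommGroup M] [Module Λ M], Filt Λ Δ l M → MemFiltCat Λ Δ M := by
  induction l with
  | nil =>
    intro M _ _ h
    have : Subsingleton M := h
    refine ⟨0, fun _ => ⊥, rfl, Subsingleton.elim _ _, ?_, fun i => i.elim0⟩
    intro i j hij
    have hi := i.2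
    have hj := j.2
    have hij' : (i : ℕ) < j := hij
    omega
  | cons a l ih =>
    intro M _ _ h
    obtain ⟨g, hg, hl⟩ := h
    obtain ⟨t, F, h0, h1, hmono, hw⟩ := ih hl
    have := hs.nontrivial a
    let G : Fin (t + 1) → Submodule Λ M := fun i => (F i).map (LinearMap.ker g).subtype
    have hGlast : G (Fin.last t) = LinearMap.ker g := by
      show (F (Fin.last t)).map _ = _
      rw [h1, Submodule.map_top, Submodule.range_subtype]
    have hGmono : StrictMono G := fun i j hij =>
      Submodule.map_strictMono_of_injective (Submodule.subtype_injective _) (hmono hij)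
    have hkerlt : LinearMap.ker g < ⊤ := by
      rw [lt_top_iff_ne_top]
      intro htop
      obtain ⟨x, hx⟩ := exists_ne (0 : Δ a)
      obtain ⟨y, rfl⟩ := hg x
      apply hx
      have : y ∈ LinearMap.ker g := by rw [htop]; trivial
      exact this
    refine ⟨t + 1, Fin.snoc (α := fun _ => Submodule Λ M) G ⊤, ?_, ?_, ?_, ?_⟩
    · have : (0 : Fin (t + 1 + 1)) = Fin.castSucc 0 := rfl
      rw [this, Fin.snoc_castSucc]
      show (F 0).map _ = _
      rw [h0, Submodule.map_bot]
    · rw [Fin.snoc_last]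
    · rw [Fin.strictMono_iff_lt_succ]
      intro i
      refine Fin.lastCases ?_ (fun i => ?_) i
      · rw [Fin.snoc_castSucc, Fin.succ_last, Fin.snoc_last, hGlast]
        exact hkerlt
      · rw [Fin.snoc_castSucc, Fin.succ_castSucc, Fin.snoc_castSucc]
        exact hGmono Fin.castSucc_lt_succ
    · intro i
      refine Fin.lastCases ?_ (fun i => ?_) i
      · refine ⟨a, ?_⟩
        rw [Fin.snoc_castSucc, Fin.succ_last, Fin.snoc_last, hGlast]
        have hk : (LinearMap.ker g).comap (⊤ : Submodule Λ M).subtype =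
          LinearMap.ker (g.comp (⊤ : Submodule Λ M).subtype) := rfl
        rw [hk]
        exact ⟨LinearMap.quotKerEquivOfSurjective _ (fun y => by
          obtain ⟨x, rfl⟩ := hg y
          exact ⟨⟨x, trivial⟩, rfl⟩)⟩
      · obtain ⟨ω, ⟨e⟩⟩ := hw i
        refine ⟨ω, ?_⟩
        rw [Fin.snoc_castSucc, Fin.succ_castSucc, Fin.snoc_castSucc]
        let φ : F i.succ ≃ₗ[Λ] G i.succ :=
          Submodule.equivMapOfInjective _ (Submodule.subtype_injective _) (F i.succ)
        refine ⟨(Submodule.Quotient.equiv _ _ φ ?_).symm.trans e⟩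
        ext x
        simp only [Submodule.mem_map, Submodule.mem_comap]
        constructor
        · rintro ⟨y, hy, rfl⟩
          exact ⟨y, hy, rfl⟩
        · rintro ⟨y, hy, hyx⟩
          refine ⟨⟨y, hmono.monotone Fin.castSucc_lt_succ.le hy⟩, hy, Subtype.ext hyx⟩

end Helpers

/-- Corollary 9.2: if `0 → L → M → N → 0` is a short exact sequence of `Λ`-modules with
`L, N ∈ 𝔉(Δ)`, then `M ∈ 𝔉(Δ)` and `ℓ_ω (M) = ℓ_ω (L) + ℓ_ω (N)` for every `ω ∈ Ω`
(computed from any `Δ`-filtrations of `L`, `M`, `N`). -/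
theorem memFiltCat_of_ses_and_ellOmega_additive
    {R : Type u} [CommRing R] [IsArtinianRing R]
    {Λ : Type u} [Ring Λ] [Algebra R Λ] [Module.Finite R Λ]
    {Ω : Type v} [Preorder Ω] [Fintype Ω] [Nonempty Ω]
    (Δ : Ω → Type u) [∀ ω, AddCommGroup (Δ ω)] [∀ ω, Module Λ (Δ ω)]
    (hs : IsHomologicalSystem Λ Δ)
    (L M N : Type u) [AddCommGroup L] [Module Λ L] [Module.Finite Λ L]
    [AddCommGroup M] [Module Λ M] [Module.Finite Λ M]
    [AddCommGroup N] [Module Λ N] [Module.Finite Λ N]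
    (f : L →ₗ[Λ] M) (g : M →ₗ[Λ] N)
    (hf : Function.Injective f) (hg : Function.Surjective g)
    (hfg : LinearMap.range f = LinearMap.ker g)
    (hL : MemFiltCat Λ Δ L) (hN : MemFiltCat Λ Δ N) :
    MemFiltCat Λ Δ M ∧
      ∀ (tL : ℕ) (FL : Fin (tL + 1) → Submodule Λ L), IsDeltaFiltration Λ Δ tL FL →
      ∀ (tM : ℕ) (FM : Fin (tM + 1) → Submodule Λ M), IsDeltaFiltration Λ Δ tM FM →
      ∀ (tN : ℕ) (FN : Fin (tN + 1) → Submodule Λ N), IsDeltaFiltration Λ Δ tN FN →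
      ∀ ω : Ω, ellOmega Λ Δ tM FM ω = ellOmega Λ Δ tL FL ω + ellOmega Λ Δ tN FN ω := by
  classical
  have : IsArtinianRing Λ := IsArtinianRing.of_finite R Λ
  have hext : ∀ lL lN : List Ω, Filt Λ Δ lL L → Filt Λ Δ lN N → Filt Λ Δ (lN ++ lL) M := by
    intro lL lN h1 h2
    refine filt_append Δ lN g hg ?_ h2
    refine filt_of_inj Δ f (LinearMap.ker g).subtype hf (Submodule.subtype_injective _) ?_ h1
    intro b
    have : b ∈ LinearMap.range f ↔ b ∈ LinearMap.ker g := by rw [hfg]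
    rw [LinearMap.mem_range] at this
    rw [this]
    exact ⟨fun h => ⟨⟨b, h⟩, rfl⟩, by rintro ⟨x, rfl⟩; exact x.2⟩
  constructor
  · obtain ⟨tL, FL, hFL⟩ := hL
    obtain ⟨tN, FN, hFN⟩ := hN
    obtain ⟨lL, h1, _⟩ := filt_of_isDeltaFiltration Δ hs tL FL hFL
    obtain ⟨lN, h2, _⟩ := filt_of_isDeltaFiltration Δ hs tN FN hFN
    exact memFiltCat_of_filt Δ hs _ (hext lL lN h1 h2)
  · intro tL FL hFL tM FM hFM tN FN hFN ω
    obtain ⟨lL, h1, c1⟩ := filt_of_isDeltaFiltration Δ hs tL FL hFL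
    obtain ⟨lN, h2, c2⟩ := filt_of_isDeltaFiltration Δ hs tN FN hFN
    obtain ⟨lM, h3, c3⟩ := filt_of_isDeltaFiltration Δ hs tM FM hFM
    have hp := filt_unique Δ hs _ lM (lN ++ lL) le_rfl h3 (hext lL lN h1 h2)
    rw [c1, c2, c3, hp.count_eq, List.count_append, add_comm]
end
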